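/- arXiv:1812.07144 — 3 statements merged into one kernel-verified Lean document; each statement's English description precedes it below -/
import Mathlib

section
/- Fix λ > 0, δ₀, δ₂ ≥ 0 with δ₀ + δ₂ < λ/4, and δ₁ ∈ (0,1). There exist constants K̄₀ ∈ (0, 1/10] and r̄₁ ∈ (0, δ₁], depending only on λ, δ₀, δ₂, such that for every K₀ > 0 and a₀ > 0 the following holds. There exist C̄ ≥ 1 (depending only on λ, δ₀, δ₂ and not on K₀), m₀ = m₀(K₀) ∈ ℕ, and r̄₀ = r̄₀(K₀, m₀) > 0, and for each r₀ ∈ (0, r̄₀] an integer m₁ (depending on r₀, K₀, a₀), such that: for every hyperbolic chart sequence (f̃_k, ℓ_k)_{k≥0} with data (λ, δ₀, δ₁) and every C^{1+Lip} map g : B^u(r₀ ℓ₀^{-1}) → ℝ^{cs} with g(0) = 0, Lip(g) ≤ K₀ and Lip(dg) ≤ a₀, the graph-transform sequence (g_k) of g with radii d_k = r₀ for k ≤ m₀ and d_k = r̄₁ for k > m₀ is well defined, and for every k ≥ m₀ + m₁: g_k is defined on all of B^u(r̄₁ ℓ_k^{-1}) and is C^{1+Lip}, Lip(g_k) ≤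 K̄₀, |(dg_k)₀| ≤ e^{-kλ/2} |(dg)₀|, and Lip(dg_k) ≤ C̄ ℓ_k. -/
open Metric Set

noncomputable section

/-- The unstable factor `ℝ^u` with the Euclidean norm. -/
abbrev EuSp (du : ℕ) := EuclideanSpace ℝ (Fin du)

/-- The center-stable factor `ℝ^{cs}` with the Euclidean norm. -/
abbrev CsSp (dcs : ℕ) := EuclideanSpace ℝ (Fin dcs)

/-- The product `ℝ^u × ℝ^{cs}`, carrying the norm `‖(u,v)‖ = max (‖u‖, ‖v‖)`. -/
abbrev PSp (du dcs : ℕ) := EuSp du × CsSp dcs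

/-- The graph of `g : ℝ^u → ℝ^{cs}` over the closed ball `B^u(r)`. -/
def uGraph (du dcs : ℕ) (r : ℝ) (g : EuSp du → CsSp dcs) : Set (PSp du dcs) :=
  {p | p.1 ∈ closedBall (0 : EuSp du) r ∧ p.2 = g p.1}

/-- `f` (with derivative field `Df`) is a hyperbolic chart map with data `(lam, δ0, ℓ, δ)`:
it fixes `0`; it is `C^{1+Lip}` on `B(δ ℓ⁻¹)` with `Lip(df) ≤ ℓ`; its derivative at `0`
preserves the splitting `ℝ^u ⊕ ℝ^{cs}`, expanding the unstable factor by at least `e^lam`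
and contracting/expanding the center-stable factor by at most `e^{δ0}`; and the
nonlinear part `f - (df)₀` has Lipschitz constant `≤ δ'` on `B(δ' ℓ⁻¹)` for all
`δ' ∈ (0, δ]`. -/
structure IsChartMap (du dcs : ℕ) (lam δ0 ℓ δ : ℝ)
    (f : PSp du dcs → PSp du dcs)
    (Df : PSp du dcs → (PSp du dcs →L[ℝ] PSp du dcs)) : Prop where
  map_zero : f 0 = 0
  hasDeriv : ∀ z ∈ closedBall (0 : PSp du dcs) (δ / ℓ),
      HasFDerivWithinAt f (Df z) (closedBall (0 : PSp du dcs) (δ / ℓ)) z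
  lipDeriv : LipschitzOnWith ℓ.toNNReal Df (closedBall (0 : PSp du dcs) (δ / ℓ))
  deriv_zero_mapsU : ∀ u : EuSp du, (Df 0 (u, 0)).2 = 0
  deriv_zero_mapsCs : ∀ v : CsSp dcs, (Df 0 (0, v)).1 = 0
  expand : ∀ u : EuSp du, Real.exp lam * ‖u‖ ≤ ‖Df 0 (u, 0)‖
  contract : ∀ v : CsSp dcs, ‖Df 0 (0, v)‖ ≤ Real.exp δ0 * ‖v‖
  lip_nonlinear : ∀ δ' : ℝ, 0 < δ' → δ' ≤ δ →
      LipschitzOnWith δ'.toNNReal (fun z => f z - Df 0 z)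
        (closedBall (0 : PSp du dcs) (δ' / ℓ))

/-- `g` (with derivative field `Dg`) is `C^{1+Lip}` on the ball `B^u(r)`, with Lipschitz
constant `≤ K` and with `Lip(dg) ≤ a`. -/
structure IsC1LipGraph (du dcs : ℕ) (r K a : ℝ)
    (g : EuSp du → CsSp dcs) (Dg : EuSp du → (EuSp du →L[ℝ] CsSp dcs)) : Prop where
  hasDeriv : ∀ u ∈ closedBall (0 : EuSp du) r,
      HasFDerivWithinAt g (Dg u) (closedBall (0 : EuSp du) r) u
  lip : LipschitzOnWith K.toNNReal g (closedBall (0 : EuSp du) r)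
  lipDeriv : LipschitzOnWith a.toNNReal Dg (closedBall (0 : EuSp du) r)


section generic

variable {E V : Type*} [NormedAddCommGroup E] [NormedSpace ℝ E] [NormedAddCommGroup V] [NormedSpace ℝ V]

/-- Working form of the chart hypotheses on the ball `B(d/ℓ)`. -/
structure ChartOn (mu nu d ℓ : ℝ) (F : E × V → E × V) (DF : E × V → (E × V →L[ℝ] E × V)) : Prop where
  zero : F 0 = 0
  der : ∀ z ∈ closedBall (0 : E × V) (d / ℓ), HasFDerivWithinAt F (DF z) (closedBall (0 : E × V) (d / ℓ)) z
  lipD : ∀ z ∈ closedBall (0 : E × V) (d / ℓ), ∀ w ∈ closedBall (0 : E × V) (d / ℓ),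
    ‖DF z - DF w‖ ≤ ℓ * ‖z - w‖
  mapsU : ∀ u : E, (DF 0 (u, 0)).2 = 0
  mapsC : ∀ v : V, (DF 0 (0, v)).1 = 0
  expand : ∀ u : E, mu * ‖u‖ ≤ ‖DF 0 (u, 0)‖
  contract : ∀ v : V, ‖DF 0 (0, v)‖ ≤ nu * ‖v‖
  nonlin : ∀ z ∈ closedBall (0 : E × V) (d / ℓ), ∀ w ∈ closedBall (0 : E × V) (d / ℓ),
    ‖F z - F w - DF 0 (z - w)‖ ≤ d * ‖z - w‖

/-- A C^{1+Lip} graph on a ball with quantitative bounds. -/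
structure GraphInv (R K a D : ℝ) (g : E → V) (G : E → (E →L[ℝ] V)) : Prop where
  zero : g 0 = 0
  der : ∀ u ∈ closedBall (0 : E) R, HasFDerivWithinAt g (G u) (closedBall (0 : E) R) u
  bd : ∀ u ∈ closedBall (0 : E) R, ‖G u‖ ≤ K
  lipD : ∀ u ∈ closedBall (0 : E) R, ∀ v ∈ closedBall (0 : E) R, ‖G u - G v‖ ≤ a * ‖u - v‖
  d0 : ‖G 0‖ ≤ D

namespace ChartOn

variable {mu nu d ℓ : ℝ} {F : E × V → E × V} {DF : E × V → (E × V →L[ℝ] E × V)}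

lemma split (h : ChartOn mu nu d ℓ F DF) (p : E × V) :
    (DF 0 p).1 = (DF 0 (p.1, 0)).1 ∧ (DF 0 p).2 = (DF 0 (0, p.2)).2 := by
  have e : p = (p.1, 0) + (0, p.2) := by simp
  have e2 : DF 0 p = DF 0 (p.1, 0) + DF 0 (0, p.2) := by rw [← map_add, ← e]
  rw [e2]
  simp [h.mapsU, h.mapsC]

lemma exp1 (h : ChartOn mu nu d ℓ F DF) (p : E × V) : mu * ‖p.1‖ ≤ ‖(DF 0 p).1‖ := by
  rw [(h.split p).1]
  have := h.expand p.1
  rwa [Prod.norm_def, h.mapsU, norm_zero, max_eq_left (norm_nonneg _)] at this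

lemma con2 (h : ChartOn mu nu d ℓ F DF) (p : E × V) : ‖(DF 0 p).2‖ ≤ nu * ‖p.2‖ := by
  rw [(h.split p).2]
  exact (norm_snd_le _).trans (h.contract _)

lemma cone (h : ChartOn mu nu d ℓ F DF) (hd : 0 ≤ d) (hnu : 0 ≤ nu) {K M eta c : ℝ} (hM : 1 ≤ M) (hKM : K ≤ M)
    (hdM : d * M ≤ eta) (hc : c ≤ mu - eta) {p q : E × V}
    (hp : p ∈ closedBall (0 : E × V) (d / ℓ)) (hq : q ∈ closedBall (0 : E × V) (d / ℓ))
    (hpq : ‖p.2 - q.2‖ ≤ K * ‖p.1 - q.1‖) :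
    c * ‖p.1 - q.1‖ ≤ ‖(F p).1 - (F q).1‖ ∧
    ‖(F p).2 - (F q).2‖ ≤ (nu * K + eta) * ‖p.1 - q.1‖ := by
  have hn := h.nonlin p hp q hq
  have n0 := norm_nonneg (p.1 - q.1)
  have hpn : ‖p - q‖ ≤ M * ‖p.1 - q.1‖ := by
    rw [Prod.norm_def]
    apply max_le
    · simp only [Prod.fst_sub]; nlinarith
    · simp only [Prod.snd_sub]; nlinarith
  have hb : ‖F p - F q - DF 0 (p - q)‖ ≤ eta * ‖p.1 - q.1‖ := by
    calc _ ≤ d * ‖p - q‖ := hn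
      _ ≤ d * (M * ‖p.1 - q.1‖) := by gcongr
      _ = (d * M) * ‖p.1 - q.1‖ := by ring
      _ ≤ _ := by gcongr
  have h1 := (norm_fst_le _).trans hb
  have h2 := (norm_snd_le _).trans hb
  have e1 := h.exp1 (p - q)
  have e2 := h.con2 (p - q)
  simp only [Prod.fst_sub, Prod.snd_sub] at h1 h2 e1 e2
  constructor
  · have := norm_sub_norm_le (DF 0 (p - q)).1 ((F p).1 - (F q).1)
    rw [norm_sub_rev ((F p).1 - (F q).1)] at h1
    nlinarith
  · have := norm_sub_norm_le ((F p).2 - (F q).2) (DF 0 (p - q)).2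
    have : nu * ‖p.2 - q.2‖ ≤ nu * (K * ‖p.1 - q.1‖) := by gcongr
    nlinarith

end ChartOn

lemma exists_equiv [FiniteDimensional ℝ E] (P : E →L[ℝ] E) {c : ℝ} (hc : 0 < c) (h : ∀ w, c * ‖w‖ ≤ ‖P w‖) :
    ∃ e : E ≃L[ℝ] E, ∀ w, e w = P w := by
  have inj : Function.Injective P.toLinearMap := by
    rw [injective_iff_map_eq_zero]
    intro w hw
    have := h w
    have hw' : P w = 0 := hw
    rw [hw', norm_zero] at this
    have : ‖w‖ ≤ 0 := by
      by_contra hh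
      push Not at hh
      nlinarith
    simpa using this
  exact ⟨(LinearEquiv.ofInjectiveEndo P.toLinearMap inj).toContinuousLinearEquiv, fun w => rfl⟩

set_option maxHeartbeats 4000000 in
open Topology Filter in
/-- One step of the graph transform on balls. -/
lemma graph_step [FiniteDimensional ℝ E] {mu nu d ℓ : ℝ} {F : E × V → E × V} {DF : E × V → (E × V →L[ℝ] E × V)}
    (h : ChartOn mu nu d ℓ F DF) (hd : 0 ≤ d) (hnu : 0 ≤ nu) (hℓ : 0 < ℓ)
    {R K a D R' K' a' D' M eta c kap : ℝ} (hM : 1 ≤ M) (hK : 0 ≤ K) (hKM : K ≤ M)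
    (hdM : d * M ≤ eta) (hc : c ≤ mu - eta) (hc0 : 0 < c) (hR : 0 ≤ R) (ha0 : 0 ≤ a)
    (hK' : nu * K + eta ≤ K' * c) (ha' : (1 + K') * M ^ 2 * ℓ + (nu + d + K' * d) * a ≤ a' * c ^ 2)
    (hR' : R' ≤ c * R) (hR'0 : 0 ≤ R') (hkap : nu ≤ kap * mu) (hD' : kap * D ≤ D') (hkap0 : 0 ≤ kap)
    {g : E → V} {G : E → (E →L[ℝ] V)} (hg : GraphInv R K a D g G)
    (hball : ∀ u ∈ closedBall (0 : E) R, (u, g u) ∈ closedBall (0 : E × V) (d / ℓ))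
    (hlip : ∀ u ∈ closedBall (0 : E) R, ∀ v ∈ closedBall (0 : E) R, ‖g u - g v‖ ≤ K * ‖u - v‖) :
    ∃ (g' : E → V) (G' : E → (E →L[ℝ] V)), GraphInv R' K' a' D' g' G' ∧
      ∀ u' ∈ closedBall (0 : E) R', ∃ u ∈ closedBall (0 : E) R, F (u, g u) = (u', g' u') := by
  have heta : 0 ≤ eta := le_trans (by positivity) hdM
  have hmu : 0 < mu := by linarith
  have hK'0 : 0 ≤ K' := by
    by_contra hh
    push Not at hh
    have : 0 ≤ nu * K := by positivity
    nlinarith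
  have zR : (0 : E) ∈ closedBall (0 : E) R := by simpa using hR
  have zR' : (0 : E) ∈ closedBall (0 : E) R' := by simpa using hR'0
  have zB : (0 : E × V) ∈ closedBall (0 : E × V) (d / ℓ) := by
    simpa using (by positivity : 0 ≤ d / ℓ)
  -- cone estimates on the graph
  have hcone : ∀ u ∈ closedBall (0 : E) R, ∀ v ∈ closedBall (0 : E) R,
      c * ‖u - v‖ ≤ ‖(F (u, g u)).1 - (F (v, g v)).1‖ := fun u hu v hv =>
    (h.cone hd hnu hM hKM hdM hc (hball u hu) (hball v hv) (hlip u hu v hv)).1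
  -- surjectivity
  have hsurj : ∀ u' ∈ closedBall (0 : E) R', ∃ u ∈ closedBall (0 : E) R, (F (u, g u)).1 = u' := by
    let A : E →L[ℝ] E := (ContinuousLinearMap.fst ℝ E V).comp ((DF 0).comp (ContinuousLinearMap.inl ℝ E V))
    have hA : ∀ w, mu * ‖w‖ ≤ ‖A w‖ := fun w => h.exp1 (w, 0)
    obtain ⟨e, he⟩ := exists_equiv A hmu hA
    have hap : ApproximatesLinearOn (fun u => (F (u, g u)).1) A (closedBall (0 : E) R) eta.toNNReal := by
      intro u hu v hv
      rw [Real.coe_toNNReal _ heta]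
      have hn := h.nonlin _ (hball u hu) _ (hball v hv)
      have hpn : ‖((u, g u) : E × V) - (v, g v)‖ ≤ M * ‖u - v‖ := by
        have n0 := norm_nonneg (u - v)
        have := hlip u hu v hv
        rw [Prod.norm_def]
        apply max_le
        · simp only [Prod.fst_sub]; nlinarith
        · simp only [Prod.snd_sub]; nlinarith
      have h1 := (norm_fst_le _).trans hn
      simp only [Prod.fst_sub] at h1
      rw [(h.split _).1] at h1
      calc _ ≤ d * ‖((u, g u) : E × V) - (v, g v)‖ := h1
        _ ≤ d * (M * ‖u - v‖) := by gcongr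
        _ = (d * M) * ‖u - v‖ := by ring
        _ ≤ _ := by gcongr
    let f'symm : A.NonlinearRightInverse :=
      { toFun := e.symm
        nnnorm := (1 / mu).toNNReal
        bound' := by
          intro y
          rw [Real.coe_toNNReal _ (by positivity)]
          have := hA (e.symm y)
          rw [← he, e.apply_symm_apply] at this
          rw [div_mul_eq_mul_div, one_mul, le_div_iff₀ hmu]
          linarith
        right_inv' := by
          intro y
          rw [← he, e.apply_symm_apply] }
    have := hap.surjOn_closedBall_of_nonlinearRightInverse f'symm hR (b := 0) subset_rfl
    intro u' hu'
    apply this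
    have e0 : (F ((0 : E), g 0)).1 = 0 := by
      rw [hg.zero]
      have : F ((0 : E), (0 : V)) = 0 := h.zero
      rw [this]; rfl
    rw [e0]
    refine closedBall_subset_closedBall ?_ hu'
    have : (f'symm.nnnorm : ℝ)⁻¹ = mu := by
      show (((1 / mu).toNNReal : ℝ))⁻¹ = mu
      rw [Real.coe_toNNReal _ (by positivity)]; simp
    rw [this, Real.coe_toNNReal _ heta]
    refine hR'.trans ?_
    gcongr
  choose! hi hiR hiF using hsurj
  have hi0 : hi 0 = 0 := by
    have := hcone (hi 0) (hiR 0 zR') 0 zR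
    rw [hiF 0 zR', hg.zero] at this
    have e0 : F ((0 : E), (0 : V)) = 0 := h.zero
    rw [e0] at this
    simp only [Prod.fst_zero, sub_zero, norm_zero] at this
    have : ‖hi 0‖ ≤ 0 := by
      by_contra hh
      push Not at hh
      nlinarith
    simpa using this
  have hilip : ∀ x ∈ closedBall (0 : E) R', ∀ y ∈ closedBall (0 : E) R', c * ‖hi x - hi y‖ ≤ ‖x - y‖ := by
    intro x hx y hy
    have := hcone _ (hiR x hx) _ (hiR y hy)
    rwa [hiF x hx, hiF y hy] at this
  -- derivative of the graph parametrization
  let N : E → (E →L[ℝ] E × V) := fun u =>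
    (DF (u, g u)).comp ((ContinuousLinearMap.id ℝ E).prod (G u))
  have hN : ∀ u w, N u w = DF (u, g u) (w, G u w) := fun u w => rfl
  have hNder : ∀ u ∈ closedBall (0 : E) R,
      HasFDerivWithinAt (fun u => F (u, g u)) (N u) (closedBall (0 : E) R) u := by
    intro u hu
    exact (h.der _ (hball u hu)).comp u ((hasFDerivWithinAt_id u _).prodMk (hg.der u hu)) (fun v hv => hball v hv)
  have hDF0 : ∀ u ∈ closedBall (0 : E) R, ‖DF (u, g u) - DF 0‖ ≤ d := by
    intro u hu
    have h1 := h.lipD _ (hball u hu) 0 zB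
    have h2 := hball u hu
    rw [mem_closedBall_zero_iff] at h2
    rw [sub_zero] at h1
    calc _ ≤ ℓ * ‖(u, g u)‖ := h1
      _ ≤ ℓ * (d / ℓ) := by gcongr
      _ = d := by field_simp
  have hwn : ∀ u ∈ closedBall (0 : E) R, ∀ w, ‖(w, G u w)‖ ≤ M * ‖w‖ := by
    intro u hu w
    have n0 := norm_nonneg w
    rw [Prod.norm_def]
    have := (G u).le_of_opNorm_le (hg.bd u hu) w
    apply max_le
    · simp only; nlinarith
    · simp only; nlinarith
  have hNd : ∀ u ∈ closedBall (0 : E) R, ∀ w, ‖N u w - DF 0 (w, G u w)‖ ≤ eta * ‖w‖ := by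
    intro u hu w
    rw [hN, ← sub_apply]
    calc _ ≤ d * ‖(w, G u w)‖ := ContinuousLinearMap.le_of_opNorm_le _ (hDF0 u hu) _
      _ ≤ d * (M * ‖w‖) := by gcongr; exact hwn u hu w
      _ = (d * M) * ‖w‖ := by ring
      _ ≤ _ := by gcongr
  have hP : ∀ u ∈ closedBall (0 : E) R, ∀ w, c * ‖w‖ ≤ ‖(N u w).1‖ := by
    intro u hu w
    have h1 := (norm_fst_le _).trans (hNd u hu w)
    have e1 := h.exp1 (w, G u w)
    simp only [Prod.fst_sub] at h1 e1
    have := norm_sub_norm_le (DF 0 (w, G u w)).1 (N u w).1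
    rw [norm_sub_rev] at h1
    have n0 := norm_nonneg w
    nlinarith
  have hQ : ∀ u ∈ closedBall (0 : E) R, ∀ w, ‖(N u w).2‖ ≤ (nu * K + eta) * ‖w‖ := by
    intro u hu w
    have h1 := (norm_snd_le _).trans (hNd u hu w)
    have e1 := h.con2 (w, G u w)
    simp only [Prod.snd_sub] at h1 e1
    have := norm_sub_norm_le (N u w).2 (DF 0 (w, G u w)).2
    have n0 := norm_nonneg w
    have h3 := (G u).le_of_opNorm_le (hg.bd u hu) w
    have : nu * ‖G u w‖ ≤ nu * (K * ‖w‖) := by gcongr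
    nlinarith
  have hE : ∀ u, ∃ H : E →L[ℝ] V, u ∈ closedBall (0 : E) R →
      (∀ w, H (N u w).1 = (N u w).2) ∧ ∀ w', ∃ w, (N u w).1 = w' := by
    intro u
    by_cases hu : u ∈ closedBall (0 : E) R
    · obtain ⟨e, he⟩ := exists_equiv ((ContinuousLinearMap.fst ℝ E V).comp (N u)) hc0 (hP u hu)
      have he' : ∀ w, e w = (N u w).1 := he
      refine ⟨((ContinuousLinearMap.snd ℝ E V).comp (N u)).comp (e.symm : E →L[ℝ] E), fun _ => ⟨?_, ?_⟩⟩
      · intro w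
        rw [← he']
        simp
      · intro w'
        exact ⟨e.symm w', by rw [← he']; simp⟩
    · exact ⟨0, fun hh => absurd hh hu⟩
  choose H hH using hE
  have hHbd : ∀ u ∈ closedBall (0 : E) R, ‖H u‖ ≤ K' := by
    intro u hu
    refine ContinuousLinearMap.opNorm_le_bound _ hK'0 ?_
    intro w'
    obtain ⟨w, rfl⟩ := (hH u hu).2 w'
    rw [(hH u hu).1]
    have n0 := norm_nonneg w
    calc _ ≤ (nu * K + eta) * ‖w‖ := hQ u hu w
      _ ≤ (K' * c) * ‖w‖ := by gcongr
      _ = K' * (c * ‖w‖) := by ring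
      _ ≤ _ := by gcongr; exact hP u hu w
  have hHlip : ∀ x ∈ closedBall (0 : E) R, ∀ y ∈ closedBall (0 : E) R,
      ‖H x - H y‖ ≤ a' * c * ‖x - y‖ := by
    intro x hx y hy
    have hac : 0 ≤ a' * c := by
      have : 0 ≤ a' * c ^ 2 := le_trans (by positivity) ha'
      by_contra hh
      push Not at hh
      nlinarith
    refine ContinuousLinearMap.opNorm_le_bound _ (by positivity) ?_
    intro w'
    obtain ⟨w, rfl⟩ := (hH x hx).2 w'
    have n0 := norm_nonneg w
    have nxy := norm_nonneg (x - y)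
    set v : V := (G x - G y) w with hv
    have hvn : ‖v‖ ≤ a * ‖x - y‖ * ‖w‖ :=
      ContinuousLinearMap.le_of_opNorm_le _ (hg.lipD x hx y hy) w
    set T : E × V := (DF (x, g x) - DF (y, g y)) (w, G x w) with hT
    set U : E × V := (DF (y, g y) - DF 0) (0, v) with hU
    have hsplit : N x w - N y w = T + U + DF 0 (0, v) := by
      have : ((0 : E), v) = (w, G x w) - (w, G y w) := by simp [hv]
      rw [hT, hU, hN, hN, this]
      simp only [sub_apply, map_sub]
      abel
    have hpn : ‖((x, g x) : E × V) - (y, g y)‖ ≤ M * ‖x - y‖ := by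
      have := hlip x hx y hy
      rw [Prod.norm_def]
      apply max_le
      · simp only [Prod.fst_sub]; nlinarith
      · simp only [Prod.snd_sub]; nlinarith
    have hTn : ‖T‖ ≤ M ^ 2 * ℓ * (‖x - y‖ * ‖w‖) := by
      calc _ ≤ (ℓ * ‖((x, g x) : E × V) - (y, g y)‖) * ‖(w, G x w)‖ :=
            ContinuousLinearMap.le_of_opNorm_le _ (h.lipD _ (hball x hx) _ (hball y hy)) _
        _ ≤ (ℓ * (M * ‖x - y‖)) * (M * ‖w‖) := by gcongr; exact hwn x hx w
        _ = _ := by ring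
    have hUn : ‖U‖ ≤ d * a * (‖x - y‖ * ‖w‖) := by
      calc _ ≤ d * ‖((0 : E), v)‖ := ContinuousLinearMap.le_of_opNorm_le _ (hDF0 y hy) _
        _ = d * ‖v‖ := by rw [Prod.norm_def]; simp
        _ ≤ d * (a * ‖x - y‖ * ‖w‖) := by gcongr
        _ = _ := by ring
    have h1 : ‖(N x w).1 - (N y w).1‖ ≤ (M ^ 2 * ℓ + d * a) * (‖x - y‖ * ‖w‖) := by
      have : (N x w).1 - (N y w).1 = (T + U).1 := by
        rw [← Prod.fst_sub, hsplit]; simp [h.mapsC]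
      rw [this]
      have := (norm_fst_le (T + U)).trans (norm_add_le T U)
      linarith
    have h2 : ‖(N x w).2 - (N y w).2‖ ≤ (M ^ 2 * ℓ + (nu + d) * a) * (‖x - y‖ * ‖w‖) := by
      have : (N x w).2 - (N y w).2 = (T + U).2 + (DF 0 (0, v)).2 := by
        rw [← Prod.snd_sub, hsplit]; simp
      rw [this]
      have e1 := (norm_snd_le (T + U)).trans (norm_add_le T U)
      have e2 := h.con2 (0, v)
      have e3 : nu * ‖v‖ ≤ nu * (a * ‖x - y‖ * ‖w‖) := by gcongr
      have e4 := norm_add_le (T + U).2 (DF 0 (0, v)).2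
      simp only at e2
      linarith
    have key : (H x - H y) (N x w).1 = ((N x w).2 - (N y w).2) - H y ((N x w).1 - (N y w).1) := by
      rw [sub_apply, (hH x hx).1, map_sub, (hH y hy).1]
      abel
    rw [key]
    have h3 := (H y).le_of_opNorm_le (hHbd y hy) ((N x w).1 - (N y w).1)
    calc _ ≤ ‖(N x w).2 - (N y w).2‖ + ‖H y ((N x w).1 - (N y w).1)‖ := norm_sub_le _ _
      _ ≤ (M ^ 2 * ℓ + (nu + d) * a) * (‖x - y‖ * ‖w‖) +
          K' * ((M ^ 2 * ℓ + d * a) * (‖x - y‖ * ‖w‖)) := by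
        gcongr
        exact h3.trans (by gcongr)
      _ = ((1 + K') * M ^ 2 * ℓ + (nu + d + K' * d) * a) * (‖x - y‖ * ‖w‖) := by ring
      _ ≤ (a' * c ^ 2) * (‖x - y‖ * ‖w‖) := by gcongr
      _ = a' * c * ‖x - y‖ * (c * ‖w‖) := by ring
      _ ≤ _ := by gcongr; exact hP x hx w
  refine ⟨fun x => (F (hi x, g (hi x))).2, fun x => H (hi x), ⟨?_, ?_, ?_, ?_, ?_⟩, ?_⟩
  · simp only [hi0, hg.zero]
    have e0 : F ((0 : E), (0 : V)) = 0 := h.zero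
    rw [e0]; rfl
  · intro y hy
    have hd1 := hNder _ (hiR y hy)
    have hd2 := hd1.snd.sub ((H (hi y)).hasFDerivAt.comp_hasFDerivWithinAt (hi y) hd1.fst)
    have hz : (ContinuousLinearMap.snd ℝ E V).comp (N (hi y)) -
        (H (hi y)).comp ((ContinuousLinearMap.fst ℝ E V).comp (N (hi y))) = 0 := by
      ext w
      simp [(hH _ (hiR y hy)).1 w]
    rw [hz] at hd2
    have hbig : (fun x => hi x - hi y) =O[𝓝[closedBall (0 : E) R'] y] (fun x => x - y) := by
      refine Asymptotics.IsBigO.of_bound (1 / c) ?_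
      filter_upwards [self_mem_nhdsWithin] with x hx
      have := hilip x hx y hy
      rw [div_mul_eq_mul_div, one_mul, le_div_iff₀ hc0]
      linarith
    have htend : Tendsto hi (𝓝[closedBall (0 : E) R'] y) (𝓝[closedBall (0 : E) R] (hi y)) := by
      refine tendsto_nhdsWithin_iff.2 ⟨?_, ?_⟩
      · have h0 : Tendsto (fun x => x - y) (𝓝[closedBall (0 : E) R'] y) (𝓝 0) := by
          have : Tendsto (fun x => x - y) (𝓝 y) (𝓝 (y - y)) := by
            exact (continuous_id.sub continuous_const).tendsto y
          rw [sub_self] at this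
          exact this.mono_left nhdsWithin_le_nhds
        have := hbig.trans_tendsto h0
        exact tendsto_sub_nhds_zero_iff.1 this
      · filter_upwards [self_mem_nhdsWithin] with x hx using hiR x hx
    have hlo := (hasFDerivWithinAt_iff_isLittleO.1 hd2).comp_tendsto htend
    rw [hasFDerivWithinAt_iff_isLittleO]
    refine (hlo.trans_isBigO hbig).congr' ?_ (EventuallyEq.refl _ _)
    filter_upwards [self_mem_nhdsWithin] with x hx
    simp [hiF x hx, hiF y hy]
    abel
  · intro x hx
    exact hHbd _ (hiR x hx)
  · intro x hx y hy
    have h1 := hHlip _ (hiR x hx) _ (hiR y hy)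
    have h2 := hilip x hx y hy
    have ha'0 : 0 ≤ a' := by
      have : 0 ≤ a' * c ^ 2 := le_trans (by positivity) ha'
      by_contra hh
      push Not at hh
      have := mul_neg_of_neg_of_pos hh (by positivity : 0 < c ^ 2)
      linarith
    calc _ ≤ a' * c * ‖hi x - hi y‖ := h1
      _ = a' * (c * ‖hi x - hi y‖) := by ring
      _ ≤ _ := by gcongr
  · simp only [hi0]
    refine le_trans ?_ hD'
    have hD0 : 0 ≤ D := (norm_nonneg _).trans hg.d0
    refine ContinuousLinearMap.opNorm_le_bound _ (by positivity) ?_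
    intro w'
    obtain ⟨w, rfl⟩ := (hH 0 zR).2 w'
    rw [(hH 0 zR).1]
    have hN0 : N 0 w = DF 0 (w, G 0 w) := by rw [hN, hg.zero]; rfl
    rw [hN0]
    have e1 := h.exp1 (w, G 0 w)
    have e2 := h.con2 (w, G 0 w)
    simp only at e1 e2
    have e3 := (G 0).le_of_opNorm_le hg.d0 w
    calc _ ≤ nu * ‖G 0 w‖ := e2
      _ ≤ nu * (D * ‖w‖) := by gcongr
      _ ≤ (kap * mu) * (D * ‖w‖) := by gcongr
      _ = kap * D * (mu * ‖w‖) := by ring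
      _ ≤ _ := by gcongr
  · intro u' hu'
    refine ⟨hi u', hiR u' hu', ?_⟩
    exact Prod.ext (hiF u' hu') (Eq.refl _)


/-- The invariant of the iteration. -/
structure StepInv (ℓ d ρ K b D : ℝ) (S : Set (E × V)) : Prop where
  sub : S ⊆ closedBall (0 : E × V) (d / ℓ)
  cone : ∀ p ∈ S, ∀ q ∈ S, ‖p.2 - q.2‖ ≤ K * ‖p.1 - q.1‖
  gr : ∃ (g : E → V) (G : E → (E →L[ℝ] V)), GraphInv (ρ / ℓ) K (b * ℓ) D g G ∧
    ∀ u ∈ closedBall (0 : E) (ρ / ℓ), (u, g u) ∈ S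

lemma StepInv.mono {ℓ d ρ K b D K' b' : ℝ} {S : Set (E × V)} (h : StepInv ℓ d ρ K b D S)
    (hℓ : 0 < ℓ) (hK : K ≤ K') (hb : b ≤ b') : StepInv ℓ d ρ K' b' D S := by
  refine ⟨h.sub, fun p hp q hq => (h.cone p hp q hq).trans (by gcongr), ?_⟩
  obtain ⟨g, G, hG, hS⟩ := h.gr
  exact ⟨g, G, ⟨hG.zero, hG.der, fun u hu => (hG.bd u hu).trans hK,
    fun u hu v hv => (hG.lipD u hu v hv).trans (by gcongr), hG.d0⟩, hS⟩

lemma StepInv.step [FiniteDimensional ℝ E] {mu nu d ℓ : ℝ} {F : E × V → E × V}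
    {DF : E × V → (E × V →L[ℝ] E × V)}
    (h : ChartOn mu nu d ℓ F DF) (hd : 0 ≤ d) (hnu : 0 ≤ nu) (hℓ : 0 < ℓ)
    {ℓ' d' ρ K b D ρ' M eta c kap e2 L : ℝ} (hM : 1 ≤ M) (hK : 0 ≤ K) (hKM : K ≤ M)
    (hℓ' : 0 < ℓ') (hℓℓ : ℓ ≤ e2 * ℓ') (hc1 : 1 ≤ c) (hL : 0 ≤ L)
    (hdM : d * M ≤ eta) (hc : c ≤ mu - eta) (hρ : 0 ≤ ρ) (hb : 0 ≤ b)
    (hkc : nu ≤ kap * c) (hkap : nu ≤ kap * mu) (hkap0 : 0 ≤ kap)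
    (hLe : L * e2 ≤ c) (hbb : (nu + 2 * eta) * e2 ≤ kap * c ^ 2) (he2 : e2 ≤ c ^ 2) (he20 : 0 ≤ e2)
    (hK'M : kap * K + eta ≤ M)
    (hρ'0 : 0 ≤ ρ') (hρ' : ρ' ≤ L * ρ) (hρ'd : M * ρ' ≤ d')
    {S : Set (E × V)} (hS : StepInv ℓ d ρ K b D S) :
    StepInv ℓ' d' ρ' (kap * K + eta) (kap * b + (1 + M) * M ^ 2) (kap * D)
      (F '' S ∩ closedBall (0 : E × V) (d' / ℓ')) := by
  have heta : 0 ≤ eta := le_trans (by positivity) hdM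
  have hK' : nu * K + eta ≤ (kap * K + eta) * c := by nlinarith
  have hcone : ∀ p ∈ F '' S ∩ closedBall (0 : E × V) (d' / ℓ'),
      ∀ q ∈ F '' S ∩ closedBall (0 : E × V) (d' / ℓ'),
      ‖p.2 - q.2‖ ≤ (kap * K + eta) * ‖p.1 - q.1‖ := by
    rintro _ ⟨⟨p, hp, rfl⟩, -⟩ _ ⟨⟨q, hq, rfl⟩, -⟩
    obtain ⟨h1, h2⟩ := h.cone hd hnu hM hKM hdM hc (hS.sub hp) (hS.sub hq) (hS.cone p hp q hq)
    calc _ ≤ (nu * K + eta) * ‖p.1 - q.1‖ := h2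
      _ ≤ ((kap * K + eta) * c) * ‖p.1 - q.1‖ := by gcongr
      _ = (kap * K + eta) * (c * ‖p.1 - q.1‖) := by ring
      _ ≤ _ := by gcongr
  obtain ⟨g, G, hG, hgS⟩ := hS.gr
  have hdη : d ≤ eta := by nlinarith
  have hKd : (kap * K + eta) * d ≤ eta := by nlinarith
  have hR' : ρ' / ℓ' ≤ c * (ρ / ℓ) := by
    rw [div_le_iff₀ hℓ']
    have : c * (ρ / ℓ) * ℓ' = c * ρ * ℓ' / ℓ := by ring
    rw [this, le_div_iff₀ hℓ]
    calc ρ' * ℓ ≤ (L * ρ) * (e2 * ℓ') := by gcongr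
      _ = (L * e2) * (ρ * ℓ') := by ring
      _ ≤ c * (ρ * ℓ') := by gcongr
      _ = _ := by ring
  have ha' : (1 + (kap * K + eta)) * M ^ 2 * ℓ + (nu + d + (kap * K + eta) * d) * (b * ℓ) ≤
      ((kap * b + (1 + M) * M ^ 2) * ℓ') * c ^ 2 := by
    calc _ ≤ (1 + M) * M ^ 2 * ℓ + (nu + eta + eta) * (b * ℓ) := by gcongr
      _ = ((1 + M) * M ^ 2 + (nu + 2 * eta) * b) * ℓ := by ring
      _ ≤ ((1 + M) * M ^ 2 + (nu + 2 * eta) * b) * (e2 * ℓ') := by gcongr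
      _ = ((1 + M) * M ^ 2 * e2 + ((nu + 2 * eta) * e2) * b) * ℓ' := by ring
      _ ≤ ((1 + M) * M ^ 2 * c ^ 2 + (kap * c ^ 2) * b) * ℓ' := by gcongr
      _ = _ := by ring
  obtain ⟨g', G', hG', hgr'⟩ := graph_step h hd hnu hℓ (R' := ρ' / ℓ') (D' := kap * D) hM hK hKM hdM hc
    (by linarith) (by positivity) (by positivity) hK' ha' hR' (by positivity) hkap le_rfl hkap0 hG
    (fun u hu => hS.sub (hgS u hu)) (fun u hu v hv => hS.cone _ (hgS u hu) _ (hgS v hv))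
  refine ⟨inter_subset_right, hcone, g', G', hG', ?_⟩
  intro u' hu'
  obtain ⟨u, hu, hF⟩ := hgr' u' hu'
  have hz : (0 : E) ∈ closedBall (0 : E) (ρ' / ℓ') := by
    simpa using (by positivity : 0 ≤ ρ' / ℓ')
  have hz' : (0 : E) ∈ closedBall (0 : E) (ρ / ℓ) := by
    simpa using (by positivity : 0 ≤ ρ / ℓ)
  refine ⟨⟨_, hgS u hu, hF⟩, ?_⟩
  -- norm bound from the cone condition with the origin
  have h0 : ‖((0 : E), g 0).2‖ = 0 := by simp [hG.zero]
  have hcon := h.cone hd hnu hM hKM hdM hc (hS.sub (hgS u hu)) (hS.sub (hgS 0 hz'))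
    (hS.cone _ (hgS u hu) _ (hgS 0 hz'))
  have e0 : F ((0 : E), g 0) = 0 := by rw [hG.zero]; exact h.zero
  rw [e0, hF] at hcon
  simp only [Prod.fst_zero, Prod.snd_zero, sub_zero] at hcon
  have hg'n : ‖g' u'‖ ≤ M * ‖u'‖ := by
    calc _ ≤ (nu * K + eta) * ‖u‖ := hcon.2
      _ ≤ ((kap * K + eta) * c) * ‖u‖ := by gcongr
      _ = (kap * K + eta) * (c * ‖u‖) := by ring
      _ ≤ M * ‖u'‖ := by
        have := hcon.1
        gcongr
  have hun : ‖u'‖ ≤ ρ' / ℓ' := by simpa using hu'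
  have hMd : M * (ρ' / ℓ') ≤ d' / ℓ' := by
    rw [← mul_div_assoc]; gcongr
  have hMu : M * ‖u'‖ ≤ M * (ρ' / ℓ') := by gcongr
  rw [mem_closedBall_zero_iff, Prod.norm_def]
  apply max_le
  · have := norm_nonneg u'
    simp only
    nlinarith
  · simp only
    linarith

end generic

lemma IsChartMap.chartOn {du dcs : ℕ} {lam δ0 ℓ δ d : ℝ} {f : PSp du dcs → PSp du dcs}
    {Df : PSp du dcs → (PSp du dcs →L[ℝ] PSp du dcs)} (h : IsChartMap du dcs lam δ0 ℓ δ f Df)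
    (hℓ : 0 < ℓ) (hd : 0 < d) (hdδ : d ≤ δ) :
    ChartOn (Real.exp lam) (Real.exp δ0) d ℓ f Df := by
  have hsub : closedBall (0 : PSp du dcs) (d / ℓ) ⊆ closedBall (0 : PSp du dcs) (δ / ℓ) :=
    closedBall_subset_closedBall (by gcongr)
  refine ⟨h.map_zero, fun z hz => (h.hasDeriv z (hsub hz)).mono hsub, ?_, h.deriv_zero_mapsU,
    h.deriv_zero_mapsCs, h.expand, h.contract, ?_⟩
  · intro z hz w hw
    have := h.lipDeriv.norm_sub_le (hsub hz) (hsub hw)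
    rwa [Real.coe_toNNReal _ hℓ.le] at this
  · intro z hz w hw
    have := (h.lip_nonlinear d hd hdδ).norm_sub_le hz hw
    rw [Real.coe_toNNReal _ hd.le] at this
    have e : f z - f w - Df 0 (z - w) = f z - Df 0 z - (f w - Df 0 w) := by
      rw [map_sub]; abel
    rw [e]
    exact this


lemma lipOn_of_norm {E V : Type*} [SeminormedAddCommGroup E] [SeminormedAddCommGroup V] {C : ℝ} (hC : 0 ≤ C)
    {f : E → V} {s : Set E} (h : ∀ x ∈ s, ∀ y ∈ s, ‖f x - f y‖ ≤ C * ‖x - y‖) :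
    LipschitzOnWith C.toNNReal f s := by
  apply LipschitzOnWith.of_dist_le_mul
  intro x hx y hy
  rw [Real.coe_toNNReal _ hC, dist_eq_norm, dist_eq_norm]
  exact h x hx y hy

lemma StepInv.lip {E V : Type*} [NormedAddCommGroup E] [NormedSpace ℝ E] [NormedAddCommGroup V]
    [NormedSpace ℝ V] {ℓ d ρ K b D R : ℝ} {S : Set (E × V)} (h : StepInv ℓ d ρ K b D S) (hK : 0 ≤ K)
    {g : E → V} (hg : ∀ u ∈ closedBall (0 : E) R, (u, g u) ∈ S) :
    LipschitzOnWith K.toNNReal g (closedBall (0 : E) R) :=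
  lipOn_of_norm hK fun x hx y hy => h.cone _ (hg x hx) _ (hg y hy)

lemma arith_a {r ρ M : ℝ} (h : 2 * (M * ρ) = r) (hM : 1 ≤ M) (hρ : 0 < ρ) : 2 * ρ ≤ r := by nlinarith

lemma arith_b {r ρ K M : ℝ} (h : 2 * (M * ρ) = r) (hM : M = K + 1) (hK : 0 < K) (hρ : 0 < ρ) :
    K * ρ ≤ r := by
  subst hM; nlinarith [mul_pos hK hρ]

lemma arith_c {p K : ℝ} (hp : p ≤ 1) (hK : 0 < K) : p * K ≤ K := by nlinarith

lemma arith_d {kap eta q K : ℝ} (hk0 : 0 < kap) (hk : kap < 1) (heta : eta ≤ (1 - kap) / 20)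
    (hq0 : 0 ≤ q) (hq : q ≤ K) : kap * (q + 1 / 20) + eta ≤ K + 1 := by nlinarith

lemma arith_e {kap a b T : ℝ} (h : (1 - kap) * b = (1 - kap) * a + T) (hk : 0 < 1 - kap) (ha : 0 < a) :
    kap * b + T ≤ b := by nlinarith [mul_pos hk ha]

set_option maxHeartbeats 4000000 in
/-- Iterated graph transforms (Proposition 3.4): after `m₀ + m₁` steps the iterated graph
transform of a `K₀`-Lipschitz graph is defined on the full chart, is `K̄₀`-Lipschitz,
its derivative at `0` decays like `e^{-kλ/2}`, and `Lip(dg_k) ≤ C̄ ℓ_k`. -/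
theorem iterated_graph_transform
    (du dcs : ℕ) (hdu : 1 ≤ du) (hdcs : 1 ≤ dcs)
    (lam δ0 δ2 δ1 : ℝ) (hlam : 0 < lam) (hδ0 : 0 ≤ δ0) (hδ2 : 0 ≤ δ2)
    (hsmall : δ0 + δ2 < lam / 4) (hδ1 : δ1 ∈ Set.Ioo (0 : ℝ) 1) :
    ∃ K0bar r1bar Cbar : ℝ,
      K0bar ∈ Set.Ioc (0 : ℝ) (1 / 10) ∧ r1bar ∈ Set.Ioc (0 : ℝ) δ1 ∧ 1 ≤ Cbar ∧
      ∀ K0 a0 : ℝ, 0 < K0 → 0 < a0 →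
      ∃ (m0 : ℕ) (r0bar : ℝ), 0 < r0bar ∧ r0bar ≤ δ1 ∧
      ∀ r0 : ℝ, 0 < r0 → r0 ≤ r0bar →
      ∃ m1 : ℕ,
        ∀ (ℓ : ℕ → ℝ) (F : ℕ → PSp du dcs → PSp du dcs)
          (DF : ℕ → PSp du dcs → (PSp du dcs →L[ℝ] PSp du dcs)),
          (∀ k, 1 ≤ ℓ k) →
          (∀ k, Real.exp (-δ2) ≤ ℓ (k + 1) / ℓ k) →
          (∀ k, ℓ (k + 1) / ℓ k ≤ Real.exp δ2) →
          (∀ k, IsChartMap du dcs lam δ0 (ℓ k) δ1 (F k) (DF k)) →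
        ∀ (g : EuSp du → CsSp dcs) (Dg : EuSp du → (EuSp du →L[ℝ] CsSp dcs)),
          g 0 = 0 → IsC1LipGraph du dcs (r0 / ℓ 0) K0 a0 g Dg →
          ∃ S : ℕ → Set (PSp du dcs),
            -- the graph-transform sequence with radii `d_k = r0` for `k ≤ m0`,
            -- `d_k = r̄1` for `k > m0`, is well defined:
            S 0 = uGraph du dcs (r0 / ℓ 0) g ∩
              closedBall (0 : PSp du dcs) (r0 / ℓ 0) ∧
            (∀ k, S (k + 1) = (F k '' S k) ∩
              closedBall (0 : PSp du dcs)
                ((if k + 1 ≤ m0 then r0 else r1bar) / ℓ (k + 1))) ∧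
            (∀ k, (∃ v : CsSp dcs, ((0 : EuSp du), v) ∈ S k) ∧
              ∀ p ∈ S k, ∀ q ∈ S k, p.1 = q.1 → p = q) ∧
            -- and for `k ≥ m0 + m1` its terms are full graphs with the stated bounds:
            ∀ k, m0 + m1 ≤ k →
              ∃ (gk : EuSp du → CsSp dcs) (Dgk : EuSp du → (EuSp du →L[ℝ] CsSp dcs)),
                S k = uGraph du dcs (r1bar / ℓ k) gk ∧
                IsC1LipGraph du dcs (r1bar / ℓ k) K0bar (Cbar * ℓ k) gk Dgk ∧
                ‖Dgk 0‖ ≤ Real.exp (-((k : ℝ) * lam / 2)) * ‖Dg 0‖ := by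
  obtain ⟨hδ1p, hδ1l⟩ := hδ1
  set mu := Real.exp lam with hmu
  set nu := Real.exp δ0 with hnu
  set e2 := Real.exp δ2 with he2
  set kap := Real.exp (-(lam / 2)) with hkap
  set c := Real.exp (3 * lam / 4) with hc
  set L := Real.exp (lam / 2) with hL
  have hmu0 : 0 < mu := Real.exp_pos _
  have hnu0 : 0 < nu := Real.exp_pos _
  have he20 : 0 < e2 := Real.exp_pos _
  have hkap0 : 0 < kap := Real.exp_pos _
  have hL0 : 0 < L := Real.exp_pos _
  have hc1 : 1 ≤ c := Real.one_le_exp (by positivity)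
  have hkap1 : kap < 1 := by rw [hkap, Real.exp_lt_one_iff]; linarith
  have hcmu : c < mu := Real.exp_lt_exp.2 (by linarith)
  have hnul : nu < L := Real.exp_lt_exp.2 (by linarith)
  have hkc : nu ≤ kap * c := by
    rw [hkap, hc, ← Real.exp_add]; exact Real.exp_le_exp.2 (by linarith)
  have hkm : nu ≤ kap * mu := by
    rw [hkap, hmu, ← Real.exp_add]; exact Real.exp_le_exp.2 (by linarith)
  have hLe : L * e2 ≤ c := by
    rw [hL, he2, ← Real.exp_add]; exact Real.exp_le_exp.2 (by linarith)
  have hc2 : c ^ 2 = Real.exp (3 * lam / 2) := by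
    rw [hc, ← Real.exp_nat_mul]; congr 1; push_cast; ring
  have hee : e2 ≤ c ^ 2 := by
    rw [hc2]; exact Real.exp_le_exp.2 (by linarith)
  have hLek : L * e2 ≤ kap * c ^ 2 := by
    rw [hc2, hkap, hL, he2, ← Real.exp_add, ← Real.exp_add]; exact Real.exp_le_exp.2 (by linarith)
  have hkL : kap * L = 1 := by
    rw [hkap, hL, ← Real.exp_add]; simp
  have h1k : 0 < 1 - kap := by linarith
  -- the small constant
  obtain ⟨eta, heta0, heta1, heta2, heta3⟩ : ∃ eta : ℝ, 0 < eta ∧ eta ≤ mu - c ∧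
      eta ≤ (L - nu) / 2 ∧ eta ≤ (1 - kap) / 20 := by
    refine ⟨min (mu - c) (min ((L - nu) / 2) ((1 - kap) / 20)), ?_, min_le_left _ _,
      (min_le_right _ _).trans (min_le_left _ _), (min_le_right _ _).trans (min_le_right _ _)⟩
    refine lt_min (by linarith) (lt_min (by linarith) (by linarith))
  have hcη : c ≤ mu - eta := by linarith
  have hbb : (nu + 2 * eta) * e2 ≤ kap * c ^ 2 := by
    refine le_trans ?_ hLek
    gcongr; linarith
  set r1 := min δ1 eta with hr1
  have hr1p : 0 < r1 := lt_min hδ1p heta0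
  have hr1δ : r1 ≤ δ1 := min_le_left _ _
  have hr1η : r1 ≤ eta := min_le_right _ _
  refine ⟨1 / 10, r1, 1 + 4 / (1 - kap), ⟨by norm_num, le_rfl⟩, ⟨hr1p, hr1δ⟩, ?_, ?_⟩
  · have : 0 ≤ 4 / (1 - kap) := by positivity
    linarith
  intro K0 a0 hK0 ha0
  obtain ⟨m0, hm0⟩ := exists_pow_lt_of_lt_one (show 0 < 1 / (20 * K0) by positivity) hkap1
  have hm0' : kap ^ m0 * K0 ≤ 1 / 20 := by
    rw [lt_div_iff₀ (by positivity)] at hm0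
    linarith
  set M := K0 + 1 with hM
  have hM1 : 1 ≤ M := by linarith
  refine ⟨m0, min r1 (eta / M), lt_min hr1p (by positivity), (min_le_left _ _).trans hr1δ, ?_⟩
  intro r0 hr0 hr0b
  have hr0r1 : r0 ≤ r1 := hr0b.trans (min_le_left _ _)
  have hr0η : r0 * M ≤ eta := by
    have := hr0b.trans (min_le_right _ _)
    rwa [le_div_iff₀ (by positivity)] at this
  set ρ := r0 / (2 * M) with hρ
  have hρ0 : 0 < ρ := by positivity
  have hρM : 2 * (M * ρ) = r0 := by rw [hρ]; field_simp
  have hρr : 2 * ρ ≤ r0 := arith_a hρM hM1 hρ0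
  set bs := a0 + (1 + M) * M ^ 2 / (1 - kap) with hbs
  have hbs0 : 0 < bs := by positivity
  obtain ⟨m1, hm1⟩ := exists_pow_lt_of_lt_one (show 0 < min (1 / bs) (ρ / r1) by positivity) hkap1
  have hm1a : kap ^ m1 * bs ≤ 1 := by
    have := hm1.le.trans (min_le_left _ _)
    rwa [le_div_iff₀ hbs0] at this
  have hm1b : kap ^ m1 * r1 ≤ ρ := by
    have := hm1.le.trans (min_le_right _ _)
    rwa [le_div_iff₀ hr1p] at this
  refine ⟨m1, ?_⟩
  intro ℓ F DF hℓ1 hℓlo hℓhi hF g Dg hg0 hgC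
  have hℓ0 : ∀ k, 0 < ℓ k := fun k => by linarith [hℓ1 k]
  have hℓℓ : ∀ k, ℓ k ≤ e2 * ℓ (k + 1) := by
    intro k
    have := hℓlo k
    rw [le_div_iff₀ (hℓ0 k), Real.exp_neg, inv_mul_le_iff₀ he20] at this
    exact this
  set dd : ℕ → ℝ := fun k => if k ≤ m0 then r0 else r1 with hdd
  have hdd0 : ∀ k, 0 < dd k := fun k => by simp only [hdd]; split_ifs <;> assumption
  have hddr1 : ∀ k, dd k ≤ r1 := fun k => by simp only [hdd]; split_ifs <;> simp [hr0r1]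
  let S : ℕ → Set (PSp du dcs) := fun n => Nat.rec
    (uGraph du dcs (r0 / ℓ 0) g ∩ closedBall (0 : PSp du dcs) (r0 / ℓ 0))
    (fun k T => (F k '' T) ∩ closedBall (0 : PSp du dcs) (dd (k + 1) / ℓ (k + 1))) n
  have hS0 : S 0 = uGraph du dcs (r0 / ℓ 0) g ∩ closedBall (0 : PSp du dcs) (r0 / ℓ 0) := rfl
  have hSs : ∀ k, S (k + 1) = (F k '' S k) ∩ closedBall (0 : PSp du dcs) (dd (k + 1) / ℓ (k + 1)) :=
    fun k => rfl
  have hchart : ∀ k, ChartOn mu nu (dd k) (ℓ k) (F k) (DF k) := fun k =>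
    (hF k).chartOn (hℓ0 k) (hdd0 k) ((hddr1 k).trans hr1δ)
  -- initial step
  have hinit : StepInv (ℓ 0) r0 ρ K0 bs ‖Dg 0‖ (S 0) := by
    have hlip : ∀ u ∈ closedBall (0 : EuSp du) (r0 / ℓ 0), ∀ v ∈ closedBall (0 : EuSp du) (r0 / ℓ 0),
        ‖g u - g v‖ ≤ K0 * ‖u - v‖ := by
      intro u hu v hv
      have := hgC.lip.norm_sub_le hu hv
      rwa [Real.coe_toNNReal _ hK0.le] at this
    have hlt : ρ / ℓ 0 < r0 / ℓ 0 := by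
      have := hℓ0 0
      gcongr; linarith
    have hsub : closedBall (0 : EuSp du) (ρ / ℓ 0) ⊆ closedBall (0 : EuSp du) (r0 / ℓ 0) :=
      closedBall_subset_closedBall hlt.le
    have hz : (0 : EuSp du) ∈ closedBall (0 : EuSp du) (r0 / ℓ 0) := by
      have := hℓ0 0
      simpa using (by positivity : 0 ≤ r0 / ℓ 0)
    refine ⟨inter_subset_right, ?_, g, Dg, ⟨hg0, ?_, ?_, ?_, le_rfl⟩, ?_⟩
    · rintro p ⟨⟨hp, hpg⟩, -⟩ q ⟨⟨hq, hqg⟩, -⟩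
      rw [hpg, hqg]
      exact hlip _ hp _ hq
    · exact fun u hu => (hgC.hasDeriv u (hsub hu)).mono hsub
    · intro u hu
      have hn : closedBall (0 : EuSp du) (r0 / ℓ 0) ∈ nhds u := by
        apply Filter.mem_of_superset (isOpen_ball.mem_nhds _) ball_subset_closedBall
        exact lt_of_le_of_lt (mem_closedBall.1 hu) hlt
      have := ((hgC.hasDeriv u (hsub hu)).hasFDerivAt hn).le_of_lipschitzOn hn hgC.lip
      rwa [Real.coe_toNNReal _ hK0.le] at this
    · intro u hu v hv
      have := hgC.lipDeriv.norm_sub_le (hsub hu) (hsub hv)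
      rw [Real.coe_toNNReal _ ha0.le] at this
      refine this.trans ?_
      gcongr
      have h1 : a0 ≤ bs := by
        have : 0 ≤ (1 + M) * M ^ 2 / (1 - kap) := by positivity
        linarith
      exact h1.trans (le_mul_of_one_le_right hbs0.le (hℓ1 0))
    · intro u hu
      refine ⟨⟨hsub hu, rfl⟩, ?_⟩
      have h1 := hlip u (hsub hu) 0 hz
      rw [hg0, sub_zero, sub_zero] at h1
      have h2 : ‖u‖ ≤ ρ / ℓ 0 := by simpa using hu
      rw [mem_closedBall_zero_iff, Prod.norm_def]
      apply max_le
      · exact h2.trans hlt.le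
      · have h3 : K0 * ‖u‖ ≤ K0 * (ρ / ℓ 0) := by gcongr
        have h4 : K0 * (ρ / ℓ 0) ≤ r0 / ℓ 0 := by
          have := hℓ0 0
          rw [← mul_div_assoc]; gcongr; exact arith_b hρM hM hK0 hρ0
        simp only
        linarith
  -- first phase
  have hph1 : ∀ k, k ≤ m0 → StepInv (ℓ k) (dd k) ρ (kap ^ k * K0 + 1 / 20) bs (kap ^ k * ‖Dg 0‖) (S k) := by
    intro k
    induction k with
    | zero =>
      intro _
      have : dd 0 = r0 := by simp [hdd]
      rw [this, pow_zero, one_mul, one_mul]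
      exact hinit.mono (hℓ0 0) (by linarith) le_rfl
    | succ k ih =>
      intro hk
      have ih' := ih (by omega)
      have hd1 : dd k = r0 := by simp only [hdd]; rw [if_pos (by omega)]
      have hd2 : dd (k + 1) = r0 := by simp only [hdd]; rw [if_pos hk]
      have hpk : kap ^ k * K0 ≤ K0 := by
        have : kap ^ k ≤ 1 := pow_le_one₀ hkap0.le hkap1.le
        exact arith_c this hK0
      have hpk0 : 0 ≤ kap ^ k * K0 := by positivity
      have hL1 : 1 ≤ L := Real.one_le_exp (by positivity)
      have st := StepInv.step (hchart k) (hdd0 k).le hnu0.le (hℓ0 k) (M := M) (eta := eta) (c := c)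
        (kap := kap) (e2 := e2) (L := L) (d' := dd (k + 1)) (ρ' := ρ) hM1 (by positivity) (by linarith)
        (hℓ0 (k + 1)) (hℓℓ k) hc1 hL0.le (by rw [hd1]; exact hr0η) hcη hρ0.le hbs0.le hkc hkm hkap0.le
        hLe hbb hee he20.le (arith_d hkap0 hkap1 heta3 hpk0 hpk) hρ0.le (le_mul_of_one_le_left hρ0.le hL1)
        (by rw [hd2]; linarith) ih'
      rw [hSs]
      have e1 : kap ^ (k + 1) * ‖Dg 0‖ = kap * (kap ^ k * ‖Dg 0‖) := by ring
      rw [e1]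
      refine st.mono (hℓ0 _) ?_ ?_
      · have : kap ^ (k + 1) * K0 = kap * (kap ^ k * K0) := by ring
        linarith
      · have : (1 - kap) * bs = (1 - kap) * a0 + (1 + M) * M ^ 2 := by
          rw [hbs]; field_simp
        exact arith_e this h1k ha0
  -- second phase
  have hph2 : ∀ j, StepInv (ℓ (m0 + j)) (dd (m0 + j)) (min (L ^ j * ρ) r1) (1 / 10)
      (kap ^ j * bs + 2 / (1 - kap)) (kap ^ (m0 + j) * ‖Dg 0‖) (S (m0 + j)) := by
    intro j
    induction j with
    | zero =>
      have e : min (L ^ 0 * ρ) r1 = ρ := by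
        rw [pow_zero, one_mul]; exact min_eq_left (by linarith)
      rw [e, add_zero, pow_zero, one_mul]
      refine (hph1 m0 le_rfl).mono (hℓ0 _) (by linarith) ?_
      have : 0 ≤ 2 / (1 - kap) := by positivity
      linarith
    | succ j ih =>
      have hd2 : dd (m0 + j + 1) = r1 := by simp only [hdd]; rw [if_neg (by omega)]
      have hρj : 0 ≤ min (L ^ j * ρ) r1 := by positivity
      have hρj' : 0 ≤ min (L ^ (j + 1) * ρ) r1 := by positivity
      have hL1 : 1 ≤ L := Real.one_le_exp (by positivity)
      have hmin : min (L ^ (j + 1) * ρ) r1 ≤ L * min (L ^ j * ρ) r1 := by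
        rw [mul_min_of_nonneg _ _ hL0.le]
        apply min_le_min
        · apply le_of_eq; ring
        · exact le_mul_of_one_le_left hr1p.le hL1
      have st := StepInv.step (hchart (m0 + j)) (hdd0 _).le hnu0.le (hℓ0 _) (M := 1) (eta := eta) (c := c)
        (kap := kap) (e2 := e2) (L := L) (d' := dd (m0 + j + 1)) (ρ' := min (L ^ (j + 1) * ρ) r1)
        le_rfl (by norm_num) (by norm_num)
        (hℓ0 (m0 + j + 1)) (hℓℓ _) hc1 hL0.le (by rw [mul_one]; exact (hddr1 _).trans hr1η) hcη hρj
        (by positivity) hkc hkm hkap0.le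
        hLe hbb hee he20.le (by linarith) hρj' hmin (by rw [hd2, one_mul]; exact min_le_right _ _) ih
      rw [← add_assoc, hSs]
      have e1 : kap ^ (m0 + j + 1) * ‖Dg 0‖ = kap * (kap ^ (m0 + j) * ‖Dg 0‖) := by ring
      rw [e1]
      refine st.mono (hℓ0 _) (by linarith) ?_
      apply le_of_eq
      field_simp
      ring
  have hall : ∀ k, ∃ d' ρ' K' b' D', 0 ≤ ρ' ∧ StepInv (ℓ k) d' ρ' K' b' D' (S k) := by
    intro k
    by_cases hk : k ≤ m0
    · exact ⟨_, _, _, _, _, hρ0.le, hph1 k hk⟩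
    · obtain ⟨j, rfl⟩ := Nat.exists_eq_add_of_le (not_le.1 hk).le
      exact ⟨_, _, _, _, _, by positivity, hph2 j⟩
  have huniq : ∀ k, ∀ p ∈ S k, ∀ q ∈ S k, p.1 = q.1 → p = q := by
    intro k p hp q hq hpq
    obtain ⟨d', ρ', K', b', D', hρ', hI⟩ := hall k
    have := hI.cone p hp q hq
    rw [hpq, sub_self, norm_zero, mul_zero] at this
    exact Prod.ext hpq (by simpa [sub_eq_zero] using this)
  refine ⟨S, hS0, hSs, fun k => ⟨?_, huniq k⟩, ?_⟩
  · obtain ⟨d', ρ', K', b', D', hρ', hI⟩ := hall k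
    obtain ⟨gk, Gk, -, hgS⟩ := hI.gr
    refine ⟨gk 0, hgS 0 ?_⟩
    have := hℓ0 k
    simpa using (by positivity : 0 ≤ ρ' / ℓ k)
  · intro k hk
    obtain ⟨j, rfl⟩ := Nat.exists_eq_add_of_le (show m0 ≤ k by omega)
    have hj : m1 ≤ j := by omega
    have hkj : kap ^ j ≤ kap ^ m1 := pow_le_pow_of_le_one hkap0.le hkap1.le hj
    have hI := hph2 j
    have hmin : min (L ^ j * ρ) r1 = r1 := by
      apply min_eq_right
      have h1 : kap ^ j * r1 ≤ ρ := le_trans (by gcongr) hm1b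
      have h2 : L ^ j * (kap ^ j * r1) ≤ L ^ j * ρ := by gcongr
      have h3 : L ^ j * (kap ^ j * r1) = r1 := by
        rw [← mul_assoc, ← mul_pow, mul_comm L, hkL, one_pow, one_mul]
      linarith
    rw [hmin] at hI
    obtain ⟨gk, Gk, hG, hgS⟩ := hI.gr
    have hkp := hℓ0 (m0 + j)
    refine ⟨gk, Gk, ?_, ⟨hG.der, ?_, ?_⟩, ?_⟩
    · ext p
      constructor
      · intro hp
        have h1 := hI.sub hp
        rw [mem_closedBall_zero_iff] at h1
        have h2 : p.1 ∈ closedBall (0 : EuSp du) (r1 / ℓ (m0 + j)) := by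
          rw [mem_closedBall_zero_iff]
          refine (norm_fst_le p).trans (h1.trans ?_)
          gcongr
          exact hddr1 _
        refine ⟨h2, ?_⟩
        have := huniq _ p hp _ (hgS _ h2) rfl
        exact congrArg Prod.snd this
      · rintro ⟨hp1, hp2⟩
        have : p = (p.1, gk p.1) := Prod.ext rfl hp2
        rw [this]
        exact hgS _ hp1
    · exact hI.lip (by norm_num) hgS
    · have hle : (kap ^ j * bs + 2 / (1 - kap)) * ℓ (m0 + j) ≤ (1 + 4 / (1 - kap)) * ℓ (m0 + j) := by
        have h1 : kap ^ j * bs ≤ 1 := le_trans (by gcongr) hm1a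
        have h2 : 2 / (1 - kap) ≤ 4 / (1 - kap) := by gcongr; norm_num
        gcongr
      refine lipOn_of_norm (by positivity) fun x hx y hy => (hG.lipD x hx y hy).trans ?_
      exact mul_le_mul_of_nonneg_right hle (norm_nonneg _)
    · refine hG.d0.trans (le_of_eq ?_)
      congr 1
      rw [hkap, ← Real.exp_nat_mul]
      congr 1
      ring
end
end

section
/- Fix λ > 0 and δ₀, δ₂ ≥ 0 with δ₀ + δ₂ < λ/4. There exist δ* > 0 and c ∈ (0,1), depending only on λ, δ₀, δ₂, such that for every δ ∈ (0, δ*), all ℓ, ℓ' ≥ 1 with e^{-δ₂} ≤ ℓ'/ℓ ≤ e^{δ₂}, and every hyperbolic chart map f̃ with data (λ, δ₀, ℓ, δ): (a) if g : B^u(δℓ^{-1}) → ℝ^{cs} is C^{1+Lip} with Lip(g) ≤ 1/10 and there exists z ∈ graph g with z ∈ B((1/2)δℓ^{-1}) and f̃(z) ∈ B((1/2)δ(ℓ')^{-1}), then there exists a C^{1+Lip} map 𝒯g : B^u(δ(ℓ')^{-1}) → ℝ^{cs} with graph 𝒯g ⊂ f̃(graph g) ∩ B(δ(ℓ')^{-1})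 and Lip(𝒯g) ≤ 1/10; (b) if g¹, g² : B^u(δℓ^{-1}) → ℝ^{cs} are C^{1+Lip} with Lip(gⁱ) ≤ 1/10 and gⁱ(0) = 0, then the maps 𝒯gⁱ exist, satisfy 𝒯gⁱ(0) = 0, and |𝒯g¹ − 𝒯g²|' ≤ c |g¹ − g²|', where |h|' := sup { |h(u)|/|u| : u ≠ 0 in the domain of h }. -/
open Metric Set

noncomputable section

lemma gt_consts (lam δ0 δ2 : ℝ) (hlam : 0 < lam) (hδ0 : 0 ≤ δ0) (hδ2 : 0 ≤ δ2)
    (hsmall : δ0 + δ2 < lam / 4) :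
    ∃ δstar c : ℝ, 0 < δstar ∧ c ∈ Set.Ioo (0 : ℝ) 1 ∧
      ∀ δ : ℝ, 0 < δ → δ < δstar →
        Real.exp δ2 + δ ≤ Real.exp lam ∧ Real.exp δ0 + 11 * δ ≤ Real.exp lam ∧
        1 + 2 * δ ≤ Real.exp lam ∧
        (Real.exp δ0 + δ) * (1 + δ) + δ * δ ≤ c * (Real.exp lam - δ) := by
  have h0 : Real.exp δ0 < Real.exp lam := Real.exp_lt_exp.2 (by linarith)
  have h2 : Real.exp δ2 < Real.exp lam := Real.exp_lt_exp.2 (by linarith)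
  have h1 : 1 ≤ Real.exp δ0 := Real.one_le_exp hδ0
  have h1' : 1 ≤ Real.exp δ2 := Real.one_le_exp hδ2
  generalize Real.exp δ0 = s at *
  generalize Real.exp δ2 = t at *
  generalize Real.exp lam = L at *
  obtain ⟨η, hη, hs, ht⟩ : ∃ η > 0, s + η ≤ L ∧ t + η ≤ L :=
    ⟨min (L - s) (L - t), lt_min (by linarith) (by linarith),
      by linarith [min_le_left (L - s) (L - t)], by linarith [min_le_right (L - s) (L - t)]⟩
  have hden : 0 < L - η / 4 := by linarith
  have hL : 0 < L := by linarith
  have hs0 : 0 < s := by linarith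
  have hc : 0 < (s + η / 4) / (L - η / 4) := by positivity
  refine ⟨η / (4 * (L + 11)), (s + η / 4) / (L - η / 4), by positivity,
    ⟨hc, ?_⟩, ?_⟩
  · rw [div_lt_one hden]; linarith
  · intro δ hδ hδs
    rw [lt_div_iff₀ (by positivity)] at hδs
    have hd1 : δ ≤ 1 := by nlinarith
    have hdL : 0 < δ * L := by positivity
    refine ⟨by nlinarith, by nlinarith, by nlinarith, ?_⟩
    have e1 : (s + δ) * (1 + δ) + δ * δ ≤ s + η / 4 := by nlinarith [mul_nonneg hδ.le (sub_nonneg.2 h0.le), mul_nonneg hδ.le (sub_nonneg.2 hd1)]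
    have e2 : L - η / 4 ≤ L - δ := by nlinarith
    calc _ ≤ s + η / 4 := e1
      _ = (s + η / 4) / (L - η / 4) * (L - η / 4) := (div_mul_cancel₀ _ hden.ne').symm
      _ ≤ _ := by gcongr

section GT
variable {E C G H : Type*} [NormedAddCommGroup E] [NormedSpace ℝ E]
  [NormedAddCommGroup C] [NormedSpace ℝ C] [NormedAddCommGroup G] [NormedSpace ℝ G]
  [NormedAddCommGroup H] [NormedSpace ℝ H]

lemma gt_norm_deriv_le {g : E → C} {Dg : E → (E →L[ℝ] C)} {r : ℝ} (hr : 0 < r) {K : NNReal}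
    (hd : ∀ u ∈ closedBall (0 : E) r, HasFDerivWithinAt g (Dg u) (closedBall (0 : E) r) u)
    (hl : LipschitzOnWith K g (closedBall (0 : E) r))
    (hc : ContinuousOn Dg (closedBall (0 : E) r)) :
    ∀ u ∈ closedBall (0 : E) r, ‖Dg u‖ ≤ K := by
  have hb : ∀ u ∈ ball (0 : E) r, ‖Dg u‖ ≤ K := by
    intro u hu
    have hn : closedBall (0 : E) r ∈ nhds u :=
      Filter.mem_of_superset (isOpen_ball.mem_nhds hu) ball_subset_closedBall
    exact ((hd u (ball_subset_closedBall hu)).hasFDerivAt hn).le_of_lipschitzOn hn hl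
  intro u hu
  have hu' : u ∈ closure (ball (0 : E) r) := by rwa [closure_ball _ hr.ne']
  have : ContinuousWithinAt (fun u => ‖Dg u‖) (ball (0 : E) r) u :=
    ((hc u hu).mono ball_subset_closedBall).norm
  exact this.closure_le hu' continuousWithinAt_const hb

lemma gt_comp_lip {r : ℝ} {P : E → (G →L[ℝ] H)} {Q : E → (C →L[ℝ] G)} (hr : 0 < r)
    (hP : ∃ K, LipschitzOnWith K P (closedBall (0 : E) r))
    (hQ : ∃ K, LipschitzOnWith K Q (closedBall (0 : E) r)) :
    ∃ K, LipschitzOnWith K (fun u => (P u).comp (Q u)) (closedBall (0 : E) r) := by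
  obtain ⟨K, hP⟩ := hP
  obtain ⟨M, hQ⟩ := hQ
  have h0 : (0 : E) ∈ closedBall (0 : E) r := by simp [hr.le]
  have bP : ∀ u ∈ closedBall (0 : E) r, ‖P u‖ ≤ ‖P 0‖ + K * r := by
    intro u hu
    have h1 := hP.norm_sub_le hu h0
    have h2 : ‖u - 0‖ ≤ r := by simpa using hu
    have h3 : ‖P u‖ ≤ ‖P u - P 0‖ + ‖P 0‖ := by simpa using norm_add_le (P u - P 0) (P 0)
    have := mul_le_mul_of_nonneg_left h2 K.2
    change (K : ℝ) * _ ≤ K * r at this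
    linarith
  have bQ : ∀ u ∈ closedBall (0 : E) r, ‖Q u‖ ≤ ‖Q 0‖ + M * r := by
    intro u hu
    have h1 := hQ.norm_sub_le hu h0
    have h2 : ‖u - 0‖ ≤ r := by simpa using hu
    have h3 : ‖Q u‖ ≤ ‖Q u - Q 0‖ + ‖Q 0‖ := by simpa using norm_add_le (Q u - Q 0) (Q 0)
    have := mul_le_mul_of_nonneg_left h2 M.2
    change (M : ℝ) * _ ≤ M * r at this
    linarith
  refine ⟨((‖P 0‖ + K * r) * M + K * (‖Q 0‖ + M * r)).toNNReal, ?_⟩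
  refine LipschitzOnWith.of_dist_le_mul fun u hu v hv => ?_
  rw [Real.coe_toNNReal _ (by positivity), dist_eq_norm, dist_eq_norm]
  have e : (P u).comp (Q u) - (P v).comp (Q v)
      = (P u).comp (Q u - Q v) + (P u - P v).comp (Q v) := by
    ext x; simp
  rw [e]
  have h1 := hP.norm_sub_le hu hv
  have h2 := hQ.norm_sub_le hu hv
  calc _ ≤ ‖(P u).comp (Q u - Q v)‖ + ‖(P u - P v).comp (Q v)‖ := norm_add_le _ _
    _ ≤ ‖P u‖ * ‖Q u - Q v‖ + ‖P u - P v‖ * ‖Q v‖ :=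
      add_le_add (ContinuousLinearMap.opNorm_comp_le _ _) (ContinuousLinearMap.opNorm_comp_le _ _)
    _ ≤ (‖P 0‖ + K * r) * (M * ‖u - v‖) + (K * ‖u - v‖) * (‖Q 0‖ + M * r) := by
      gcongr
      · exact bP u hu
      · exact bQ v hv
    _ = _ := by ring

lemma gt_exists_equiv [FiniteDimensional ℝ E] {T : E →L[ℝ] E} {μ : ℝ} (hμ : 0 < μ)
    (hT : ∀ v, μ * ‖v‖ ≤ ‖T v‖) :
    ∃ e : E ≃L[ℝ] E, (e : E →L[ℝ] E) = T ∧ ‖(e.symm : E →L[ℝ] E)‖ ≤ μ⁻¹ := by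
  have hi : Function.Injective (T : E →ₗ[ℝ] E) := by
    rw [← LinearMap.ker_eq_bot, LinearMap.ker_eq_bot']
    intro v hv
    have := hT v
    rw [show T v = 0 from hv, norm_zero] at this
    exact norm_le_zero_iff.1 (by nlinarith)
  have he : ∀ v, (LinearEquiv.ofInjectiveEndo (T : E →ₗ[ℝ] E) hi).toContinuousLinearEquiv v = T v :=
    fun v => rfl
  refine ⟨(LinearEquiv.ofInjectiveEndo (T : E →ₗ[ℝ] E) hi).toContinuousLinearEquiv, ?_, ?_⟩
  · ext v; exact he v
  · generalize (LinearEquiv.ofInjectiveEndo (T : E →ₗ[ℝ] E) hi).toContinuousLinearEquiv = e at he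
    refine ContinuousLinearMap.opNorm_le_bound _ (by positivity) fun v => ?_
    have := hT (e.symm v)
    rw [← he, e.apply_symm_apply] at this
    rw [inv_mul_eq_div, le_div_iff₀ hμ, mul_comm]
    exact this

/-- The inverse of an expanding `C^{1+Lip}` map is `C^{1+Lip}`. -/
lemma gt_inverse [FiniteDimensional ℝ E] {φ ψ : E → E} {Dφ : E → (E →L[ℝ] E)} {r r' μ : ℝ}
    (hμ : 0 < μ)
    (hd : ∀ u ∈ closedBall (0 : E) r, HasFDerivWithinAt φ (Dφ u) (closedBall (0 : E) r) u)
    (hexp : ∀ u ∈ closedBall (0 : E) r, ∀ v, μ * ‖v‖ ≤ ‖Dφ u v‖)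
    (hl : ∃ K, LipschitzOnWith K Dφ (closedBall (0 : E) r))
    (hmap : ∀ w ∈ closedBall (0 : E) r', ψ w ∈ closedBall (0 : E) r)
    (hinv : ∀ w ∈ closedBall (0 : E) r', φ (ψ w) = w)
    (hψ : ∃ K, LipschitzOnWith K ψ (closedBall (0 : E) r')) :
    ∃ Dψ : E → (E →L[ℝ] E),
      (∀ w ∈ closedBall (0 : E) r', HasFDerivWithinAt ψ (Dψ w) (closedBall (0 : E) r') w) ∧
      ∃ K, LipschitzOnWith K Dψ (closedBall (0 : E) r') := by
  classical
  have hex : ∀ u, ∃ e : E ≃L[ℝ] E, u ∈ closedBall (0 : E) r →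
      (e : E →L[ℝ] E) = Dφ u ∧ ‖(e.symm : E →L[ℝ] E)‖ ≤ μ⁻¹ := by
    intro u
    by_cases hu : u ∈ closedBall (0 : E) r
    · obtain ⟨e, he⟩ := gt_exists_equiv hμ (hexp u hu)
      exact ⟨e, fun _ => he⟩
    · exact ⟨ContinuousLinearEquiv.refl ℝ E, fun h => absurd h hu⟩
  choose e he using hex
  obtain ⟨K, hl⟩ := hl
  obtain ⟨M, hψ⟩ := hψ
  refine ⟨fun w => ((e (ψ w)).symm : E →L[ℝ] E), ?_, ?_⟩
  · intro w hw
    refine HasFDerivWithinAt.of_local_left_inverse (f := φ) (t := closedBall (0 : E) r) ?_ ?_ hw ?_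
    · exact (hψ.continuousOn w hw).tendsto_nhdsWithin hmap
    · rw [(he _ (hmap w hw)).1]; exact hd _ (hmap w hw)
    · exact Filter.eventually_of_mem self_mem_nhdsWithin hinv
  · refine ⟨(μ⁻¹ * (K * M) * μ⁻¹).toNNReal, LipschitzOnWith.of_dist_le_mul fun w hw x hx => ?_⟩
    rw [Real.coe_toNNReal _ (by positivity), dist_eq_norm, dist_eq_norm]
    obtain ⟨h1, h2⟩ := he _ (hmap w hw)
    obtain ⟨h3, h4⟩ := he _ (hmap x hx)
    have h5 := hl.norm_sub_le (hmap x hx) (hmap w hw)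
    have h6 := hψ.norm_sub_le hx hw
    rw [← h1, ← h3] at h5
    have e1 : ((e (ψ w)).symm : E →L[ℝ] E) - ((e (ψ x)).symm : E →L[ℝ] E)
      = ((e (ψ w)).symm : E →L[ℝ] E).comp
        (((e (ψ x) : E →L[ℝ] E) - (e (ψ w) : E →L[ℝ] E)).comp
          ((e (ψ x)).symm : E →L[ℝ] E)) := by
      ext v; simp
    rw [e1]
    calc _ ≤ ‖((e (ψ w)).symm : E →L[ℝ] E)‖ *
          (‖(e (ψ x) : E →L[ℝ] E) - (e (ψ w) : E →L[ℝ] E)‖ * ‖((e (ψ x)).symm : E →L[ℝ] E)‖) := by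
          refine (ContinuousLinearMap.opNorm_comp_le _ _).trans ?_
          gcongr
          exact ContinuousLinearMap.opNorm_comp_le _ _
      _ ≤ μ⁻¹ * ((K * (M * ‖x - w‖)) * μ⁻¹) := by
          gcongr
          exact h5.trans (by gcongr)
      _ = _ := by rw [norm_sub_rev x w]; ring

end GT

section GT2
variable {du dcs : ℕ} {lam δ0 ℓ δ : ℝ} {f : PSp du dcs → PSp du dcs}
  {Df : PSp du dcs → (PSp du dcs →L[ℝ] PSp du dcs)}

lemma gt_A1 (hf : IsChartMap du dcs lam δ0 ℓ δ f Df) (z : PSp du dcs) :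
    (Df 0 z).1 = (Df 0 (z.1, 0)).1 := by
  have h : z = (z.1, 0) + (0, z.2) := by ext <;> simp
  conv_lhs => rw [h, map_add]
  rw [Prod.fst_add, hf.deriv_zero_mapsCs, add_zero]

lemma gt_A1n (hf : IsChartMap du dcs lam δ0 ℓ δ f Df) (z : PSp du dcs) :
    Real.exp lam * ‖z.1‖ ≤ ‖(Df 0 z).1‖ := by
  rw [gt_A1 hf]
  have h := hf.expand z.1
  rw [Prod.norm_def, hf.deriv_zero_mapsU, norm_zero, max_eq_left (norm_nonneg _)] at h
  exact h

lemma gt_A2n (hf : IsChartMap du dcs lam δ0 ℓ δ f Df) (z : PSp du dcs) :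
    ‖(Df 0 z).2‖ ≤ Real.exp δ0 * ‖z.2‖ := by
  have h : z = (z.1, 0) + (0, z.2) := by ext <;> simp
  have e : (Df 0 z).2 = (Df 0 (0, z.2)).2 := by
    conv_lhs => rw [h, map_add]
    rw [Prod.snd_add, hf.deriv_zero_mapsU, zero_add]
  rw [e]
  exact (norm_snd_le _).trans (hf.contract z.2)

lemma gt_N (hf : IsChartMap du dcs lam δ0 ℓ δ f Df) (hδ : 0 < δ) {z y : PSp du dcs}
    (hz : z ∈ closedBall (0 : PSp du dcs) (δ / ℓ)) (hy : y ∈ closedBall (0 : PSp du dcs) (δ / ℓ)) :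
    ‖(f z - Df 0 z) - (f y - Df 0 y)‖ ≤ δ * ‖z - y‖ := by
  have h := (hf.lip_nonlinear δ hδ le_rfl).norm_sub_le hz hy
  rwa [Real.coe_toNNReal _ hδ.le] at h

lemma gt_est1 (hf : IsChartMap du dcs lam δ0 ℓ δ f Df) (hδ : 0 < δ) {z y : PSp du dcs}
    (hz : z ∈ closedBall (0 : PSp du dcs) (δ / ℓ)) (hy : y ∈ closedBall (0 : PSp du dcs) (δ / ℓ)) :
    Real.exp lam * ‖z.1 - y.1‖ ≤ ‖(f z).1 - (f y).1‖ + δ * ‖z - y‖ := by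
  have h1 := gt_N hf hδ hz hy
  have h2 := gt_A1n hf (z - y)
  have h3 : (Df 0 (z - y)).1 = ((f z).1 - (f y).1) - ((f z - Df 0 z) - (f y - Df 0 y)).1 := by
    rw [map_sub]; simp only [Prod.fst_sub]; abel
  rw [h3] at h2
  have h4 := norm_sub_le ((f z).1 - (f y).1) ((f z - Df 0 z) - (f y - Df 0 y)).1
  have h5 := norm_fst_le ((f z - Df 0 z) - (f y - Df 0 y))
  rw [Prod.fst_sub] at h2
  linarith

lemma gt_est2 (hf : IsChartMap du dcs lam δ0 ℓ δ f Df) (hδ : 0 < δ) {z y : PSp du dcs}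
    (hz : z ∈ closedBall (0 : PSp du dcs) (δ / ℓ)) (hy : y ∈ closedBall (0 : PSp du dcs) (δ / ℓ)) :
    ‖(f z).2 - (f y).2‖ ≤ Real.exp δ0 * ‖z.2 - y.2‖ + δ * ‖z - y‖ := by
  have h1 := gt_N hf hδ hz hy
  have h2 := gt_A2n hf (z - y)
  have h3 : (f z).2 - (f y).2 = (Df 0 (z - y)).2 + ((f z - Df 0 z) - (f y - Df 0 y)).2 := by
    rw [map_sub]; simp only [Prod.snd_sub]; abel
  have h4 := norm_add_le (Df 0 (z - y)).2 ((f z - Df 0 z) - (f y - Df 0 y)).2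
  have h5 := norm_snd_le ((f z - Df 0 z) - (f y - Df 0 y))
  rw [Prod.snd_sub] at h2
  rw [h3]
  linarith

lemma gt_g_lip {r a : ℝ} {g : EuSp du → CsSp dcs} {Dg : EuSp du → (EuSp du →L[ℝ] CsSp dcs)}
    (hg : IsC1LipGraph du dcs r (1 / 10) a g Dg) {u v : EuSp du}
    (hu : u ∈ closedBall (0 : EuSp du) r) (hv : v ∈ closedBall (0 : EuSp du) r) :
    ‖g u - g v‖ ≤ 1 / 10 * ‖u - v‖ := by
  have h := hg.lip.norm_sub_le hu hv
  rwa [Real.coe_toNNReal _ (by norm_num)] at h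

lemma gt_pair {r a : ℝ} {g : EuSp du → CsSp dcs} {Dg : EuSp du → (EuSp du →L[ℝ] CsSp dcs)}
    (hg : IsC1LipGraph du dcs r (1 / 10) a g Dg) {u v : EuSp du}
    (hu : u ∈ closedBall (0 : EuSp du) r) (hv : v ∈ closedBall (0 : EuSp du) r) :
    ‖((u, g u) : PSp du dcs) - (v, g v)‖ ≤ ‖u - v‖ := by
  have h := gt_g_lip hg hu hv
  rw [Prod.mk_sub_mk, Prod.norm_mk]
  exact max_le le_rfl (by linarith [norm_nonneg (u - v)])

/-- Surjectivity of the unstable component onto a ball. -/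
lemma gt_surj (hf : IsChartMap du dcs lam δ0 ℓ δ f Df) (hδ : 0 < δ) (hℓ : 0 < ℓ)
    (hδL : δ < Real.exp lam) {a r' : ℝ}
    {g : EuSp du → CsSp dcs} {Dg : EuSp du → (EuSp du →L[ℝ] CsSp dcs)}
    (hg : IsC1LipGraph du dcs (δ / ℓ) (1 / 10) a g Dg)
    (hgr : ∀ u ∈ closedBall (0 : EuSp du) (δ / ℓ),
      ((u, g u) : PSp du dcs) ∈ closedBall (0 : PSp du dcs) (δ / ℓ))
    (hr' : r' + δ * (δ / ℓ) ≤ Real.exp lam * (δ / ℓ)) {w : EuSp du} (hw : ‖w‖ ≤ r') :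
    ∃ u ∈ closedBall (0 : EuSp du) (δ / ℓ), (f (u, g u)).1 = w := by
  have hr : 0 < δ / ℓ := by positivity
  have hL := Real.exp_pos lam
  obtain ⟨e, he, hen⟩ := gt_exists_equiv (E := EuSp du)
    (T := (ContinuousLinearMap.fst ℝ (EuSp du) (CsSp dcs)).comp
      ((Df 0).comp (ContinuousLinearMap.inl ℝ (EuSp du) (CsSp dcs)))) hL (fun v => by
        simpa using gt_A1n hf (v, 0))
  have he' : ∀ v, e v = (Df 0 (v, 0)).1 := fun v => by
    have := DFunLike.congr_fun he v
    simpa using this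
  have hes : ∀ v, ‖e.symm v‖ ≤ (Real.exp lam)⁻¹ * ‖v‖ := fun v =>
    ((e.symm : EuSp du →L[ℝ] EuSp du).le_opNorm v).trans (by gcongr)
  set N : PSp du dcs → PSp du dcs := fun z => f z - Df 0 z with hN
  set Φ : EuSp du → EuSp du := fun u => e.symm (w - (N (u, g u)).1) with hΦ
  have h0 : (0 : PSp du dcs) ∈ closedBall (0 : PSp du dcs) (δ / ℓ) := by simp [hr.le]
  have hmaps : MapsTo Φ (closedBall (0 : EuSp du) (δ / ℓ)) (closedBall (0 : EuSp du) (δ / ℓ)) := by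
    intro u hu
    have h1 := gt_N hf hδ (hgr u hu) h0
    rw [hf.map_zero, map_zero, sub_zero, sub_zero, sub_zero] at h1
    have h2 : ‖((u, g u) : PSp du dcs)‖ ≤ δ / ℓ := by simpa using hgr u hu
    have h3 : ‖(N (u, g u)).1‖ ≤ δ * (δ / ℓ) :=
      (norm_fst_le _).trans (h1.trans (by gcongr))
    have h4 := norm_sub_le w (N (u, g u)).1
    rw [mem_closedBall_zero_iff]
    refine (hes _).trans ?_
    rw [inv_mul_le_iff₀ hL]
    linarith
  have hcon : ContractingWith (δ / Real.exp lam).toNNReal (hmaps.restrict Φ _ _) := by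
    refine ⟨?_, LipschitzWith.of_dist_le_mul fun u v => ?_⟩
    · rw [Real.toNNReal_lt_one, div_lt_one hL]; exact hδL
    · rw [Real.coe_toNNReal _ (by positivity), Subtype.dist_eq, Subtype.dist_eq, dist_eq_norm,
        dist_eq_norm]
      change ‖Φ u.1 - Φ v.1‖ ≤ _
      have h1 := gt_N hf hδ (hgr u.1 u.2) (hgr v.1 v.2)
      have h2 := gt_pair hg u.2 v.2
      have h3 : Φ u.1 - Φ v.1 = e.symm ((N (v.1, g v.1) - N (u.1, g u.1)).1) := by
        simp only [hΦ]
        rw [← map_sub]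
        exact congrArg e.symm (sub_sub_sub_cancel_left _ _ w)
      rw [h3]
      refine (hes _).trans ?_
      have h4 := norm_fst_le (N (v.1, g v.1) - N (u.1, g u.1))
      rw [norm_sub_rev (N (v.1, g v.1))] at h4
      rw [inv_mul_le_iff₀ hL]
      have h5 : Real.exp lam * (δ / Real.exp lam * ‖u.1 - v.1‖) = δ * ‖u.1 - v.1‖ := by
        field_simp
      rw [h5]
      exact h4.trans (h1.trans (by gcongr))
  obtain ⟨u, hu, hfix, -⟩ := hcon.exists_fixedPoint' isClosed_closedBall.isComplete hmaps
    (x := 0) (by simp [hr.le]) (edist_ne_top _ _)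
  refine ⟨u, hu, ?_⟩
  have h1 : e (Φ u) = e u := congrArg e hfix
  simp only [hΦ, e.apply_symm_apply] at h1
  rw [he', ← gt_A1 hf (u, g u)] at h1
  have h2 : (N (u, g u)).1 = (f (u, g u)).1 - (Df 0 (u, g u)).1 := rfl
  rw [h2] at h1
  have := sub_eq_iff_eq_add.1 h1
  rw [this]; abel

/-- Part (a). -/
lemma gt_part_a (hf : IsChartMap du dcs lam δ0 ℓ δ f Df) (hδ : 0 < δ) (hℓ : 0 < ℓ)
    {ℓ' : ℝ} (hℓ' : 0 < ℓ') {a : ℝ}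
    (hr' : δ / ℓ' + δ * (δ / ℓ) ≤ Real.exp lam * (δ / ℓ))
    (hlip : Real.exp δ0 + 11 * δ ≤ Real.exp lam)
    {g : EuSp du → CsSp dcs} {Dg : EuSp du → (EuSp du →L[ℝ] CsSp dcs)}
    (hg : IsC1LipGraph du dcs (δ / ℓ) (1 / 10) a g Dg)
    (hz : ∃ z ∈ uGraph du dcs (δ / ℓ) g,
              z ∈ closedBall (0 : PSp du dcs) (δ / (2 * ℓ)) ∧
              f z ∈ closedBall (0 : PSp du dcs) (δ / (2 * ℓ'))) :
    ∃ (ghat : EuSp du → CsSp dcs) (Dghat : EuSp du → (EuSp du →L[ℝ] CsSp dcs))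
      (a' : ℝ), 0 ≤ a' ∧
      IsC1LipGraph du dcs (δ / ℓ') (1 / 10) a' ghat Dghat ∧
      uGraph du dcs (δ / ℓ') ghat ⊆
        (f '' uGraph du dcs (δ / ℓ) g) ∩ closedBall (0 : PSp du dcs) (δ / ℓ') := by
  classical
  obtain ⟨⟨u0, v0⟩, ⟨hu0, hv0⟩, hz1, hz2⟩ := hz
  simp only at hu0 hv0
  subst hv0
  have hs0 := Real.exp_pos δ0
  have hμ : 0 < Real.exp lam - δ := by linarith
  have hr : 0 < δ / ℓ := by positivity
  have hrp : 0 < δ / ℓ' := by positivity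
  have e1 : δ / (2 * ℓ) = δ / ℓ / 2 := by field_simp
  have e2 : δ / (2 * ℓ') = δ / ℓ' / 2 := by field_simp
  rw [e1] at hz1
  rw [e2] at hz2
  set r := δ / ℓ with hrdef
  set r' := δ / ℓ' with hrpdef
  rw [mem_closedBall_zero_iff] at hz1 hz2
  have hz1a := (norm_fst_le _).trans hz1
  have hz1b := (norm_snd_le _).trans hz1
  have hz2a := (norm_fst_le _).trans hz2
  have hz2b := (norm_snd_le _).trans hz2
  simp only at hz1a hz1b
  have hgr : ∀ u ∈ closedBall (0 : EuSp du) r,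
      ((u, g u) : PSp du dcs) ∈ closedBall (0 : PSp du dcs) r := by
    intro u hu
    have h1 := gt_g_lip hg hu hu0
    rw [mem_closedBall_zero_iff] at hu ⊢
    have h2 := norm_sub_le u u0
    have h3 := norm_le_norm_add_norm_sub' (g u) (g u0)
    rw [Prod.norm_mk]
    exact max_le hu (by linarith)
  -- expansion of the unstable component
  have hexp : ∀ u ∈ closedBall (0 : EuSp du) r, ∀ v ∈ closedBall (0 : EuSp du) r,
      (Real.exp lam - δ) * ‖u - v‖ ≤ ‖(f (u, g u)).1 - (f (v, g v)).1‖ := by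
    intro u hu v hv
    have h1 := gt_est1 hf hδ (hgr u hu) (hgr v hv)
    have h2 := mul_le_mul_of_nonneg_left (gt_pair hg hu hv) hδ.le
    simp only at h1
    linarith
  have hex : ∀ w, ∃ u, w ∈ closedBall (0 : EuSp du) r' →
      u ∈ closedBall (0 : EuSp du) r ∧ (f (u, g u)).1 = w := by
    intro w
    by_cases hw : w ∈ closedBall (0 : EuSp du) r'
    · obtain ⟨u, hu⟩ := gt_surj hf hδ hℓ (by linarith) hg hgr hr' (mem_closedBall_zero_iff.1 hw)
      exact ⟨u, fun _ => hu⟩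
    · exact ⟨0, fun h => absurd h hw⟩
  choose ψ hψ using hex
  have hmap : ∀ w ∈ closedBall (0 : EuSp du) r', ψ w ∈ closedBall (0 : EuSp du) r :=
    fun w hw => (hψ w hw).1
  have hinv : ∀ w ∈ closedBall (0 : EuSp du) r', (f (ψ w, g (ψ w))).1 = w :=
    fun w hw => (hψ w hw).2
  have hψl : ∀ w ∈ closedBall (0 : EuSp du) r', ∀ x ∈ closedBall (0 : EuSp du) r',
      (Real.exp lam - δ) * ‖ψ w - ψ x‖ ≤ ‖w - x‖ := by
    intro w hw x hx
    have := hexp _ (hmap w hw) _ (hmap x hx)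
    rwa [hinv w hw, hinv x hx] at this
  have hψL : LipschitzOnWith ((Real.exp lam - δ)⁻¹).toNNReal ψ (closedBall (0 : EuSp du) r') := by
    refine LipschitzOnWith.of_dist_le_mul fun w hw x hx => ?_
    rw [Real.coe_toNNReal _ (by positivity), dist_eq_norm, dist_eq_norm, inv_mul_eq_div,
      le_div_iff₀ hμ, mul_comm]
    exact hψl w hw x hx
  -- the graph embedding
  have hgrD : ∀ u ∈ closedBall (0 : EuSp du) r,
      HasFDerivWithinAt (fun u => f (u, g u))
        ((Df (u, g u)).comp ((ContinuousLinearMap.id ℝ (EuSp du)).prod (Dg u)))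
        (closedBall (0 : EuSp du) r) u := by
    intro u hu
    exact (hf.hasDeriv _ (hgr u hu)).comp u ((hasFDerivWithinAt_id u _).prodMk (hg.hasDeriv u hu))
      hgr
  have hPlip : ∃ K, LipschitzOnWith K (fun u : EuSp du => Df (u, g u))
      (closedBall (0 : EuSp du) r) := by
    have hl : LipschitzOnWith 1 (fun u : EuSp du => ((u, g u) : PSp du dcs))
        (closedBall (0 : EuSp du) r) := by
      refine LipschitzOnWith.of_dist_le_mul fun u hu v hv => ?_
      rw [dist_eq_norm, dist_eq_norm, NNReal.coe_one, one_mul]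
      exact gt_pair hg hu hv
    exact ⟨ℓ.toNNReal * 1, hf.lipDeriv.comp hl (fun u hu => hgr u hu)⟩
  have hQlip : ∃ K, LipschitzOnWith K
      (fun u : EuSp du => (ContinuousLinearMap.id ℝ (EuSp du)).prod (Dg u))
      (closedBall (0 : EuSp du) r) := by
    refine ⟨a.toNNReal, LipschitzOnWith.of_dist_le_mul fun u hu v hv => ?_⟩
    have h1 := hg.lipDeriv.dist_le_mul u hu v hv
    refine le_trans ?_ h1
    rw [dist_eq_norm, dist_eq_norm]
    refine ContinuousLinearMap.opNorm_le_bound _ (norm_nonneg _) fun x => ?_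
    have h2 := (Dg u - Dg v).le_opNorm x
    simpa [Prod.norm_def] using h2
  have hFlip := gt_comp_lip hr hPlip hQlip
  have hconst : ∀ {G : Type} [NormedAddCommGroup G] [NormedSpace ℝ G] (P : PSp du dcs →L[ℝ] G),
      ∃ K, LipschitzOnWith K (fun _ : EuSp du => P) (closedBall (0 : EuSp du) r) :=
    fun P => ⟨0, (LipschitzWith.const P).lipschitzOnWith⟩
  have hφlip := gt_comp_lip hr (hconst (ContinuousLinearMap.fst ℝ (EuSp du) (CsSp dcs))) hFlip
  have hhlip := gt_comp_lip hr (hconst (ContinuousLinearMap.snd ℝ (EuSp du) (CsSp dcs))) hFlip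
  have hDg : ∀ u ∈ closedBall (0 : EuSp du) r, ‖Dg u‖ ≤ 1 / 10 := by
    have := gt_norm_deriv_le hr hg.hasDeriv hg.lip hg.lipDeriv.continuousOn
    rwa [Real.coe_toNNReal _ (by norm_num)] at this
  have hDexp : ∀ u ∈ closedBall (0 : EuSp du) r, ∀ v,
      (Real.exp lam - δ) * ‖v‖ ≤ ‖((ContinuousLinearMap.fst ℝ (EuSp du) (CsSp dcs)).comp
        ((Df (u, g u)).comp ((ContinuousLinearMap.id ℝ (EuSp du)).prod (Dg u)))) v‖ := by
    intro u hu v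
    have h0 : (0 : PSp du dcs) ∈ closedBall (0 : PSp du dcs) r := by simp [hr.le]
    have h1 := hf.lipDeriv.norm_sub_le (hgr u hu) h0
    rw [Real.coe_toNNReal _ hℓ.le, sub_zero] at h1
    have h2 := mem_closedBall_zero_iff.1 (hgr u hu)
    have h3 : ‖Df (u, g u) - Df 0‖ ≤ δ := by
      refine h1.trans ((mul_le_mul_of_nonneg_left h2 hℓ.le).trans ?_)
      rw [hrdef]; exact (mul_div_cancel₀ δ hℓ.ne').le
    have h4 : ‖((v, Dg u v) : PSp du dcs)‖ ≤ ‖v‖ := by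
      rw [Prod.norm_mk]
      refine max_le le_rfl (((Dg u).le_of_opNorm_le (hDg u hu) v).trans ?_)
      linarith [norm_nonneg v]
    have h5 : ‖(Df (u, g u) - Df 0) (v, Dg u v)‖ ≤ δ * ‖v‖ :=
      ((Df (u, g u) - Df 0).le_of_opNorm_le h3 _).trans (by gcongr)
    have h6 := gt_A1n hf (v, Dg u v)
    have h7 : (Df 0 (v, Dg u v)).1 = (Df (u, g u) (v, Dg u v)).1
        - ((Df (u, g u) - Df 0) (v, Dg u v)).1 := by
      rw [_root_.sub_apply, Prod.fst_sub]; abel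
    have h8 := norm_sub_le (Df (u, g u) (v, Dg u v)).1 ((Df (u, g u) - Df 0) (v, Dg u v)).1
    have h9 := norm_fst_le ((Df (u, g u) - Df 0) (v, Dg u v))
    rw [h7] at h6
    change _ ≤ ‖(Df (u, g u) (v, Dg u v)).1‖
    simp only at h6
    linarith
  obtain ⟨Dψ, hDψ, hDψl⟩ := gt_inverse (φ := fun u => (f (u, g u)).1) hμ
    (fun u hu => (ContinuousLinearMap.fst ℝ (EuSp du) (CsSp dcs)).hasFDerivAt.comp_hasFDerivWithinAt
      u (hgrD u hu)) hDexp hφlip hmap hinv ⟨_, hψL⟩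
  -- derivative of the transformed graph
  obtain ⟨K, hK⟩ := hhlip
  obtain ⟨M, hM⟩ := gt_comp_lip hrp ⟨_, hK.comp hψL hmap⟩ hDψl
  have hlipG : ∀ w ∈ closedBall (0 : EuSp du) r', ∀ x ∈ closedBall (0 : EuSp du) r',
      ‖(f (ψ w, g (ψ w))).2 - (f (ψ x, g (ψ x))).2‖ ≤ 1 / 10 * ‖w - x‖ := by
    intro w hw x hx
    have h1 := gt_est2 hf hδ (hgr _ (hmap w hw)) (hgr _ (hmap x hx))
    have h2 := mul_le_mul_of_nonneg_left (gt_pair hg (hmap w hw) (hmap x hx)) hδ.le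
    have h3 := mul_le_mul_of_nonneg_left (gt_g_lip hg (hmap w hw) (hmap x hx)) hs0.le
    have h4 := hψl w hw x hx
    have h5 := mul_le_mul_of_nonneg_right hlip (norm_nonneg (ψ w - ψ x))
    simp only at h1
    linarith
  refine ⟨fun w => (f (ψ w, g (ψ w))).2, fun w =>
    ((ContinuousLinearMap.snd ℝ (EuSp du) (CsSp dcs)).comp ((Df (ψ w, g (ψ w))).comp
      ((ContinuousLinearMap.id ℝ (EuSp du)).prod (Dg (ψ w))))).comp (Dψ w), M, M.2, ⟨fun w hw => ?_, ?_, ?_⟩, ?_⟩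
  rotate_left
  · refine LipschitzOnWith.of_dist_le_mul fun w hw x hx => ?_
    rw [Real.coe_toNNReal _ (by norm_num), dist_eq_norm, dist_eq_norm]
    exact hlipG w hw x hx
  · rw [Real.toNNReal_coe]; exact hM
  · rintro ⟨w, y⟩ ⟨hw, hy⟩
    simp only at hw hy
    subst hy
    refine ⟨⟨(ψ w, g (ψ w)), ⟨hmap w hw, rfl⟩, Prod.ext (hinv w hw) rfl⟩, ?_⟩
    have hw0 : (f (u0, g u0)).1 ∈ closedBall (0 : EuSp du) r' := by
      rw [mem_closedBall_zero_iff]; linarith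
    have hψ0 : ψ (f (u0, g u0)).1 = u0 := by
      have h1 := hexp _ (hmap _ hw0) _ hu0
      rw [hinv _ hw0, sub_self, norm_zero] at h1
      exact sub_eq_zero.1 (norm_le_zero_iff.1 (nonpos_of_mul_nonpos_right h1 hμ))
    have h1 := hlipG w hw _ hw0
    rw [hψ0] at h1
    rw [mem_closedBall_zero_iff] at hw ⊢
    have h2 := norm_sub_le w (f (u0, g u0)).1
    have h3 := norm_le_norm_add_norm_sub' (f (ψ w, g (ψ w))).2 (f (u0, g u0)).2
    rw [Prod.norm_mk]
    exact max_le hw (by linarith)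
  · exact ((ContinuousLinearMap.snd ℝ (EuSp du) (CsSp dcs)).hasFDerivAt.comp_hasFDerivWithinAt
      (ψ w) (hgrD _ (hmap w hw))).comp w (hDψ w hw) hmap

/-- Pointwise estimate for part (b). -/
lemma gt_part_b (hf : IsChartMap du dcs lam δ0 ℓ δ f Df) (hδ : 0 < δ)
    (h2δ : 1 + 2 * δ ≤ Real.exp lam) {c : ℝ} (hc0 : 0 < c)
    (hc : (Real.exp δ0 + δ) * (1 + δ) + δ * δ ≤ c * (Real.exp lam - δ)) {a1 a2 : ℝ}
    {g1 g2 : EuSp du → CsSp dcs} {Dg1 Dg2 : EuSp du → (EuSp du →L[ℝ] CsSp dcs)}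
    (hg1 : IsC1LipGraph du dcs (δ / ℓ) (1 / 10) a1 g1 Dg1)
    (hg2 : IsC1LipGraph du dcs (δ / ℓ) (1 / 10) a2 g2 Dg2)
    (h10 : g1 0 = 0) (h20 : g2 0 = 0) {b : ℝ} (hb : 0 ≤ b)
    (hbb : ∀ u ∈ closedBall (0 : EuSp du) (δ / ℓ), ‖g1 u - g2 u‖ ≤ b * ‖u‖)
    {u1 u2 : EuSp du} (hu1 : u1 ∈ closedBall (0 : EuSp du) (δ / ℓ))
    (hu2 : u2 ∈ closedBall (0 : EuSp du) (δ / ℓ))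
    (heq : (f (u1, g1 u1)).1 = (f (u2, g2 u2)).1) :
    (Real.exp lam - δ) * ‖u2‖ ≤ ‖(f (u2, g2 u2)).1‖ ∧
    ‖(f (u1, g1 u1)).2 - (f (u2, g2 u2)).2‖ ≤ c * b * ‖(f (u2, g2 u2)).1‖ := by
  have hr : 0 ≤ δ / ℓ := (norm_nonneg _).trans (mem_closedBall_zero_iff.1 hu1)
  have h0 : (0 : EuSp du) ∈ closedBall (0 : EuSp du) (δ / ℓ) := by simp [hr]
  have h00 : (0 : PSp du dcs) ∈ closedBall (0 : PSp du dcs) (δ / ℓ) := by simp [hr]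
  have k1 := gt_pair hg1 hu1 h0
  have k2 := gt_pair hg2 hu2 h0
  rw [h10, Prod.mk_zero_zero, sub_zero, sub_zero] at k1
  rw [h20, Prod.mk_zero_zero, sub_zero, sub_zero] at k2
  have m1 : ((u1, g1 u1) : PSp du dcs) ∈ closedBall (0 : PSp du dcs) (δ / ℓ) :=
    mem_closedBall_zero_iff.2 (k1.trans (mem_closedBall_zero_iff.1 hu1))
  have m2 : ((u2, g2 u2) : PSp du dcs) ∈ closedBall (0 : PSp du dcs) (δ / ℓ) :=
    mem_closedBall_zero_iff.2 (k2.trans (mem_closedBall_zero_iff.1 hu2))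
  have hA : (Real.exp lam - δ) * ‖u2‖ ≤ ‖(f (u2, g2 u2)).1‖ := by
    have h1 := gt_est1 hf hδ m2 h00
    rw [hf.map_zero] at h1
    simp only [Prod.fst_zero, sub_zero] at h1
    have := mul_le_mul_of_nonneg_left k2 hδ.le
    linarith
  refine ⟨hA, ?_⟩
  have q1 := gt_est1 hf hδ m1 m2
  have q2 := gt_est2 hf hδ m1 m2
  rw [heq, sub_self, norm_zero, zero_add] at q1
  simp only at q1 q2
  have hD : ‖g1 u1 - g2 u2‖ ≤ 1 / 10 * ‖u1 - u2‖ + b * ‖u2‖ := by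
    have e1 := gt_g_lip hg1 hu1 hu2
    have e2 := hbb u2 hu2
    have e3 := norm_sub_le_norm_sub_add_norm_sub (g1 u1) (g1 u2) (g2 u2)
    linarith
  have hn : ‖((u1, g1 u1) : PSp du dcs) - (u2, g2 u2)‖ ≤ ‖u1 - u2‖ + ‖g1 u1 - g2 u2‖ := by
    rw [Prod.mk_sub_mk, Prod.norm_mk]
    exact max_le (by linarith [norm_nonneg (g1 u1 - g2 u2)]) (by linarith [norm_nonneg (u1 - u2)])
  have hn' := mul_le_mul_of_nonneg_left hn hδ.le
  have hs0 := Real.exp_pos δ0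
  have hd0 := norm_nonneg (u1 - u2)
  have hD0 := norm_nonneg (g1 u1 - g2 u2)
  generalize ‖((u1, g1 u1) : PSp du dcs) - (u2, g2 u2)‖ = n at *
  generalize ‖(f (u1, g1 u1)).2 - (f (u2, g2 u2)).2‖ = R at *
  generalize ‖u1 - u2‖ = d at *
  generalize ‖g1 u1 - g2 u2‖ = D at *
  generalize Real.exp lam = L at *
  generalize Real.exp δ0 = s at *
  have hB0 : 0 ≤ b * ‖u2‖ := by positivity
  have hcA := mul_le_mul_of_nonneg_left hA (mul_nonneg hc0.le hb)
  have hcB := mul_le_mul_of_nonneg_right hc hB0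
  refine le_trans ?_ hcA
  have hfin : c * b * ((L - δ) * ‖u2‖) = c * (L - δ) * (b * ‖u2‖) := by ring
  rw [hfin]
  refine le_trans ?_ hcB
  generalize b * ‖u2‖ = B at *
  have hδD := mul_le_mul_of_nonneg_left hD hδ.le
  have t1 : d ≤ δ * B := by
    have p1 : (1 + 2 * δ) * d ≤ L * d := mul_le_mul_of_nonneg_right h2δ hd0
    have p2 : 0 ≤ δ * d := by positivity
    nlinarith
  have t2 : D ≤ (1 + δ) * B := by nlinarith [mul_nonneg hδ.le hB0]
  have t3 : (s + δ) * D ≤ (s + δ) * ((1 + δ) * B) := by gcongr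
  have t4 : δ * d ≤ δ * (δ * B) := by gcongr
  nlinarith

end GT2

/-- Existence and contraction of the graph transform (Lemma 2.6): (a) a Lipschitz graph
crossing the chart transforms to a full graph over the next chart; (b) for graphs
through `0` the transform contracts the norm `|h|' = sup ‖h u‖ / ‖u‖` by a factor
`c < 1` independent of the chart. -/
theorem graph_transform_exists_and_contracts
    (du dcs : ℕ) (hdu : 1 ≤ du) (hdcs : 1 ≤ dcs)
    (lam δ0 δ2 : ℝ) (hlam : 0 < lam) (hδ0 : 0 ≤ δ0) (hδ2 : 0 ≤ δ2)
    (hsmall : δ0 + δ2 < lam / 4) :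
    ∃ δstar c : ℝ, 0 < δstar ∧ c ∈ Set.Ioo (0 : ℝ) 1 ∧
      ∀ δ : ℝ, 0 < δ → δ < δstar →
      ∀ ℓ ℓ' : ℝ, 1 ≤ ℓ → 1 ≤ ℓ' →
        Real.exp (-δ2) ≤ ℓ' / ℓ → ℓ' / ℓ ≤ Real.exp δ2 →
      ∀ (f : PSp du dcs → PSp du dcs)
        (Df : PSp du dcs → (PSp du dcs →L[ℝ] PSp du dcs)),
        IsChartMap du dcs lam δ0 ℓ δ f Df →
        -- (a) existence of the graph transform
        ((∀ (g : EuSp du → CsSp dcs) (Dg : EuSp du → (EuSp du →L[ℝ] CsSp dcs)) (a : ℝ),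
            0 ≤ a →
            IsC1LipGraph du dcs (δ / ℓ) (1 / 10) a g Dg →
            (∃ z ∈ uGraph du dcs (δ / ℓ) g,
              z ∈ closedBall (0 : PSp du dcs) (δ / (2 * ℓ)) ∧
              f z ∈ closedBall (0 : PSp du dcs) (δ / (2 * ℓ'))) →
            ∃ (ghat : EuSp du → CsSp dcs) (Dghat : EuSp du → (EuSp du →L[ℝ] CsSp dcs))
              (a' : ℝ), 0 ≤ a' ∧
              IsC1LipGraph du dcs (δ / ℓ') (1 / 10) a' ghat Dghat ∧
              uGraph du dcs (δ / ℓ') ghat ⊆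
                (f '' uGraph du dcs (δ / ℓ) g) ∩ closedBall (0 : PSp du dcs) (δ / ℓ')) ∧
        -- (b) contraction for graphs through the origin
        (∀ (g1 g2 : EuSp du → CsSp dcs)
           (Dg1 Dg2 : EuSp du → (EuSp du →L[ℝ] CsSp dcs)) (a1 a2 : ℝ),
            0 ≤ a1 → 0 ≤ a2 →
            IsC1LipGraph du dcs (δ / ℓ) (1 / 10) a1 g1 Dg1 →
            IsC1LipGraph du dcs (δ / ℓ) (1 / 10) a2 g2 Dg2 →
            g1 0 = 0 → g2 0 = 0 →
            ∃ (gh1 gh2 : EuSp du → CsSp dcs)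
              (Dgh1 Dgh2 : EuSp du → (EuSp du →L[ℝ] CsSp dcs)) (a1' a2' : ℝ),
              0 ≤ a1' ∧ 0 ≤ a2' ∧
              IsC1LipGraph du dcs (δ / ℓ') (1 / 10) a1' gh1 Dgh1 ∧
              IsC1LipGraph du dcs (δ / ℓ') (1 / 10) a2' gh2 Dgh2 ∧
              uGraph du dcs (δ / ℓ') gh1 ⊆
                (f '' uGraph du dcs (δ / ℓ) g1) ∩ closedBall (0 : PSp du dcs) (δ / ℓ') ∧
              uGraph du dcs (δ / ℓ') gh2 ⊆
                (f '' uGraph du dcs (δ / ℓ) g2) ∩ closedBall (0 : PSp du dcs) (δ / ℓ') ∧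
              gh1 0 = 0 ∧ gh2 0 = 0 ∧
              ∀ b : ℝ, 0 ≤ b →
                (∀ u ∈ closedBall (0 : EuSp du) (δ / ℓ), ‖g1 u - g2 u‖ ≤ b * ‖u‖) →
                ∀ u ∈ closedBall (0 : EuSp du) (δ / ℓ'),
                  ‖gh1 u - gh2 u‖ ≤ c * b * ‖u‖)) := by
  obtain ⟨δstar, c, hδs, hc, hconst⟩ := gt_consts lam δ0 δ2 hlam hδ0 hδ2 hsmall
  refine ⟨δstar, c, hδs, hc, ?_⟩
  intro δ hδ hδlt ℓ ℓ' hℓ hℓ' hq1 hq2 f Df hf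
  obtain ⟨c1, c2, c3, c4⟩ := hconst δ hδ hδlt
  have hℓ0 : 0 < ℓ := by linarith
  have hℓ0' : 0 < ℓ' := by linarith
  have hr : 0 < δ / ℓ := by positivity
  have hr' : δ / ℓ' + δ * (δ / ℓ) ≤ Real.exp lam * (δ / ℓ) := by
    have h1 : ℓ ≤ Real.exp δ2 * ℓ' := by
      rw [Real.exp_neg, le_div_iff₀ hℓ0, inv_mul_le_iff₀ (Real.exp_pos _)] at hq1
      exact hq1
    have h2 : δ / ℓ' ≤ Real.exp δ2 * (δ / ℓ) := by
      rw [div_le_iff₀ hℓ0']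
      have h3 : Real.exp δ2 * (δ / ℓ) * ℓ' = (Real.exp δ2 * ℓ') * (δ / ℓ) := by ring
      rw [h3]
      calc δ = ℓ * (δ / ℓ) := (mul_div_cancel₀ δ hℓ0.ne').symm
        _ ≤ _ := by gcongr
    have h4 := mul_le_mul_of_nonneg_right c1 hr.le
    linarith
  have ha : ∀ (g : EuSp du → CsSp dcs) (Dg : EuSp du → (EuSp du →L[ℝ] CsSp dcs)) (a : ℝ),
      IsC1LipGraph du dcs (δ / ℓ) (1 / 10) a g Dg → g 0 = 0 →
      ∃ z ∈ uGraph du dcs (δ / ℓ) g, z ∈ closedBall (0 : PSp du dcs) (δ / (2 * ℓ)) ∧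
              f z ∈ closedBall (0 : PSp du dcs) (δ / (2 * ℓ')) := by
    intro g Dg a _ hg0
    refine ⟨0, ⟨?_, ?_⟩, ?_, ?_⟩
    · exact mem_closedBall_self hr.le
    · exact hg0.symm
    · exact mem_closedBall_self (by positivity)
    · rw [hf.map_zero]; exact mem_closedBall_self (by positivity)
  refine ⟨?_, ?_⟩
  · intro g Dg a _ hg hz
    exact gt_part_a hf hδ hℓ0 hℓ0' hr' c2 hg hz
  · intro g1 g2 Dg1 Dg2 a1 a2 _ _ hg1 hg2 h10 h20
    obtain ⟨gh1, Dgh1, a1', p1, q1, s1⟩ :=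
      gt_part_a hf hδ hℓ0 hℓ0' hr' c2 hg1 (ha g1 Dg1 a1 hg1 h10)
    obtain ⟨gh2, Dgh2, a2', p2, q2, s2⟩ :=
      gt_part_a hf hδ hℓ0 hℓ0' hr' c2 hg2 (ha g2 Dg2 a2 hg2 h20)
    have hzero : ∀ (g gh : EuSp du → CsSp dcs) (Dg : EuSp du → (EuSp du →L[ℝ] CsSp dcs)) (a : ℝ),
        IsC1LipGraph du dcs (δ / ℓ) (1 / 10) a g Dg → g 0 = 0 →
        uGraph du dcs (δ / ℓ') gh ⊆
          (f '' uGraph du dcs (δ / ℓ) g) ∩ closedBall (0 : PSp du dcs) (δ / ℓ') → gh 0 = 0 := by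
      intro g gh Dg a hg hg0 hs
      have hm : ((0, gh 0) : PSp du dcs) ∈ uGraph du dcs (δ / ℓ') gh :=
        ⟨mem_closedBall_self (by positivity), rfl⟩
      obtain ⟨⟨⟨u, v⟩, ⟨hu, hv⟩, hfu⟩, -⟩ := hs hm
      simp only at hu hv
      subst hv
      have h1 := (gt_part_b hf hδ c3 hc.1 c4 hg hg hg0 hg0 le_rfl (by simp) hu hu rfl).1
      rw [hfu, norm_zero] at h1
      have h2 : u = 0 :=
        norm_le_zero_iff.1 (nonpos_of_mul_nonpos_right h1 (by linarith))
      subst h2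
      rw [hg0, Prod.mk_zero_zero, hf.map_zero] at hfu
      exact (congrArg Prod.snd hfu).symm
    refine ⟨gh1, gh2, Dgh1, Dgh2, a1', a2', p1, p2, q1, q2, s1, s2,
      hzero g1 gh1 Dg1 a1 hg1 h10 s1, hzero g2 gh2 Dg2 a2 hg2 h20 s2, ?_⟩
    intro b hb hbb w hw
    obtain ⟨⟨⟨u1, v1⟩, ⟨hu1, hv1⟩, hf1⟩, -⟩ := s1 (show ((w, gh1 w) : PSp du dcs) ∈ _ from ⟨hw, rfl⟩)
    obtain ⟨⟨⟨u2, v2⟩, ⟨hu2, hv2⟩, hf2⟩, -⟩ := s2 (show ((w, gh2 w) : PSp du dcs) ∈ _ from ⟨hw, rfl⟩)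
    simp only at hu1 hv1 hu2 hv2
    subst hv1 hv2
    have h1 := (gt_part_b hf hδ c3 hc.1 c4 hg1 hg2 h10 h20 hb hbb hu1 hu2
      (by rw [hf1, hf2])).2
    rw [hf1, hf2] at h1
    exact h1
end
end

section
/- Fix λ > 0 and δ₀, δ₂ ≥ 0 with δ₀ + δ₂ < λ/4. There exist δ* > 0 and C > 0, depending only on λ, δ₀, δ₂, such that for every δ ∈ (0, δ*) and every backward hyperbolic chart sequence (f̃_k, ℓ_k)_{k≤0} with data (λ, δ₀, δ), the following holds. There is a unique family of maps g_k : B^u(δ ℓ_k^{-1}) → ℝ^{cs} (k ≤ 0) with g_k(0) = 0 and Lip(g_k) ≤ 1/10 such that f̃_k(graph g_k) ⊃ graph g_{k+1} for every k ≤ −1. Moreover: each g_k is C^{1+Lip} with (dg_k)₀ = 0 and Lip(dg_k) ≤ C ℓ_k; and whenever z₁, z₂ ∈ graph g_k ∩ f̃_k^{-1}(graph g_{k+1}), one has |f̃_k(z₁) − f̃_k(z₂)| ≥ (e^λ − δ) |z₁ − z₂|. -/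
open Metric Set

noncomputable section

section generic

variable {E V : Type*} [NormedAddCommGroup E] [NormedSpace ℝ E] [FiniteDimensional ℝ E]
  [NormedAddCommGroup V] [NormedSpace ℝ V] [FiniteDimensional ℝ V]

/-- Quantitative consequences of being a chart map. -/
structure CMap (a b δ ℓ r : ℝ) (f : E × V → E × V) (Df : E × V → (E × V →L[ℝ] E × V))
    (A : E →L[ℝ] E) : Prop where
  zero : f 0 = 0
  n1 : ∀ z z', ‖z‖ ≤ r → ‖z'‖ ≤ r → ‖(f z).1 - (f z').1 - A (z.1 - z'.1)‖ ≤ δ * ‖z - z'‖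
  n2 : ∀ z z', ‖z‖ ≤ r → ‖z'‖ ≤ r →
    ‖(f z).2 - (f z').2‖ ≤ b * ‖z.2 - z'.2‖ + δ * ‖z - z'‖
  t : ∀ z z', ‖z‖ ≤ r → ‖z'‖ ≤ r → ‖f z' - f z - Df z (z' - z)‖ ≤ ℓ * ‖z' - z‖ ^ 2
  l : ∀ z z', ‖z‖ ≤ r → ‖z'‖ ≤ r → ‖Df z' - Df z‖ ≤ ℓ * ‖z' - z‖
  d1 : ∀ z, ‖z‖ ≤ r → ∀ p, ‖(Df z p).1 - A p.1‖ ≤ δ * ‖p‖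
  d2 : ∀ z, ‖z‖ ≤ r → ∀ p, ‖(Df z p).2‖ ≤ b * ‖p.2‖ + δ * ‖p‖
  d0 : ∀ x, (Df 0 (x, 0)).2 = 0
  ex : ∀ x, a * ‖x‖ ≤ ‖A x‖

/-- The class of admissible graphs. -/
structure GG (r M : ℝ) (g : E → V) (D : E → (E →L[ℝ] V)) : Prop where
  g0 : g 0 = 0
  D0 : D 0 = 0
  lip : ∀ u u', ‖u‖ ≤ r → ‖u'‖ ≤ r → ‖g u' - g u‖ ≤ 1 / 10 * ‖u' - u‖
  Db : ∀ u, ‖u‖ ≤ r → ‖D u‖ ≤ 1 / 10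
  q : ∀ u u', ‖u‖ ≤ r → ‖u'‖ ≤ r → ‖g u' - g u - D u (u' - u)‖ ≤ M * ‖u' - u‖ ^ 2
  Dl : ∀ u u', ‖u‖ ≤ r → ‖u'‖ ≤ r → ‖D u' - D u‖ ≤ M * ‖u' - u‖

lemma norm_pair_of_le {x : E} {y : V} (h : ‖y‖ ≤ 1 / 10 * ‖x‖) : ‖(x, y)‖ = ‖x‖ := by
  rw [Prod.norm_def]
  exact max_eq_left (by have := norm_nonneg x; simp only; linarith)

lemma surj_of_expand {m : ℝ} (hm : 0 < m) (Φ : E →L[ℝ] E) (h : ∀ x, m * ‖x‖ ≤ ‖Φ x‖) :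
    Function.Bijective Φ := by
  have inj : Function.Injective Φ := by
    rw [injective_iff_map_eq_zero]
    intro x hx
    have := h x
    rw [hx, norm_zero] at this
    have h2 := norm_nonneg x
    exact norm_eq_zero.1 (by nlinarith)
  exact ⟨inj, (LinearMap.injective_iff_surjective (f := (Φ : E →ₗ[ℝ] E))).1 inj⟩

lemma factor_of_expand {m : ℝ} (hm : 0 < m) (Φ : E →L[ℝ] E) (h : ∀ x, m * ‖x‖ ≤ ‖Φ x‖)
    (Ψ : E →L[ℝ] V) : ∃ T : E →L[ℝ] V, ∀ x, T (Φ x) = Ψ x := by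
  let e := (LinearEquiv.ofBijective (Φ : E →ₗ[ℝ] E)
    (surj_of_expand hm Φ h)).toContinuousLinearEquiv
  refine ⟨Ψ.comp (e.symm : E →L[ℝ] E), fun x => ?_⟩
  have : e.symm (Φ x) = x := e.symm_apply_apply x
  simp [this]

lemma cover {a δ r : ℝ} (hδ : 0 < δ) (ha : 0 < a) (hr : 0 ≤ r) (A : E →L[ℝ] E)
    (hA : ∀ x, a * ‖x‖ ≤ ‖A x‖) (φ : E → E) (h0 : φ 0 = 0)
    (hφ : ∀ w w', ‖w‖ ≤ r → ‖w'‖ ≤ r → ‖φ w - φ w' - A (w - w')‖ ≤ δ * ‖w - w'‖)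
    (u : E) (hu : ‖u‖ ≤ (a - δ) * r) : ∃ w, ‖w‖ ≤ r ∧ φ w = u := by
  have happ : ApproximatesLinearOn φ A (closedBall (0 : E) r) δ.toNNReal := by
    intro x hx y hy
    rw [Real.coe_toNNReal _ hδ.le]
    exact hφ x y (by simpa using hx) (by simpa using hy)
  choose s hs using (surj_of_expand ha A hA).2
  let R : A.NonlinearRightInverse :=
    { toFun := s
      nnnorm := (a⁻¹).toNNReal
      bound' := by
        intro y
        rw [Real.coe_toNNReal _ (by positivity)]
        have := hA (s y)
        rw [hs] at this
        rw [inv_mul_eq_div, le_div_iff₀ ha]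
        linarith
      right_inv' := hs }
  have := happ.surjOn_closedBall_of_nonlinearRightInverse R hr le_rfl
  have hR : ((R.nnnorm : ℝ))⁻¹ = a := by
    change ((a⁻¹.toNNReal : ℝ))⁻¹ = a
    rw [Real.coe_toNNReal _ (by positivity), inv_inv]
  rw [hR, Real.coe_toNNReal _ hδ.le, h0] at this
  obtain ⟨w, hw, h⟩ := this (by simpa using hu : u ∈ closedBall (0 : E) ((a - δ) * r))
  exact ⟨w, by simpa using hw, h⟩

lemma graph_step_s10 {a b δ ℓ r r' M M' : ℝ} (hδ : 0 < δ) (hb : 0 ≤ b) (ha : 1 ≤ a - δ)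
    (hr : 0 ≤ r) (hM : 0 ≤ M) (hM' : 0 ≤ M') (hℓ : 0 ≤ ℓ)
    (h1 : r' ≤ (a - δ) * r) (h2 : b / 10 + δ ≤ (a - δ) / 10)
    (h3 : ℓ * (11 / 10) + (b + 11 / 10 * δ) * M ≤ M' * (a - δ) ^ 2)
    {f : E × V → E × V} {Df : E × V → (E × V →L[ℝ] E × V)} {A : E →L[ℝ] E}
    (hf : CMap a b δ ℓ r f Df A) {g : E → V} {D : E → (E →L[ℝ] V)} (hg : GG r M g D) :
    ∃ (g' : E → V) (D' : E → (E →L[ℝ] V)), GG r' M' g' D' ∧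
      ∀ u, ‖u‖ ≤ r' → ∃ w, ‖w‖ ≤ r ∧ f (w, g w) = (u, g' u) := by
  have ha0 : 0 < a - δ := by linarith
  have hgw : ∀ w, ‖w‖ ≤ r → ‖g w‖ ≤ 1 / 10 * ‖w‖ := by
    intro w hw
    simpa [hg.g0] using hg.lip 0 w (by simpa using hr) hw
  have hz : ∀ w, ‖w‖ ≤ r → ‖(w, g w)‖ ≤ r := fun w hw => by
    rw [norm_pair_of_le (hgw w hw)]; exact hw
  have hzz : ∀ w w', ‖w‖ ≤ r → ‖w'‖ ≤ r → ‖(w, g w) - (w', g w')‖ = ‖w - w'‖ := by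
    intro w w' hw hw'
    rw [Prod.mk_sub_mk, norm_pair_of_le (hg.lip w' w hw' hw)]
  have hφ : ∀ w w', ‖w‖ ≤ r → ‖w'‖ ≤ r →
      ‖(f (w, g w)).1 - (f (w', g w')).1 - A (w - w')‖ ≤ δ * ‖w - w'‖ := by
    intro w w' hw hw'
    have := hf.n1 _ _ (hz w hw) (hz w' hw')
    rwa [hzz w w' hw hw'] at this
  have hexp : ∀ w w', ‖w‖ ≤ r → ‖w'‖ ≤ r →
      (a - δ) * ‖w - w'‖ ≤ ‖(f (w, g w)).1 - (f (w', g w')).1‖ := by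
    intro w w' hw hw'
    have k1 := hφ w w' hw hw'
    have k2 := hf.ex (w - w')
    have k3 := norm_sub_norm_le (A (w - w')) ((f (w, g w)).1 - (f (w', g w')).1)
    rw [norm_sub_rev (A (w - w'))] at k3
    linarith
  have f0 : (f ((0 : E), g 0)).1 = 0 := by
    rw [hg.g0]; change (f 0).1 = 0; rw [hf.zero]; rfl
  have hsurj : ∀ u, ‖u‖ ≤ r' → ∃ w, ‖w‖ ≤ r ∧ (f (w, g w)).1 = u := fun u hu =>
    cover hδ (by linarith : 0 < a) hr A hf.ex (fun w => (f (w, g w)).1) f0 hφ u (hu.trans h1)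
  choose! h hhr hhu using hsurj
  -- contraction of the inverse branch
  have hcon : ∀ u u', ‖u‖ ≤ r' → ‖u'‖ ≤ r' → (a - δ) * ‖h u' - h u‖ ≤ ‖u' - u‖ := by
    intro u u' hu hu'
    have := hexp (h u') (h u) (hhr u' hu') (hhr u hu)
    rwa [hhu u hu, hhu u' hu'] at this
  let J : E → (E →L[ℝ] E × V) := fun w =>
    (Df (w, g w)).comp ((ContinuousLinearMap.id ℝ E).prod (D w))
  have hJ : ∀ w x, J w x = Df (w, g w) (x, D w x) := fun w x => rfl
  have hDx : ∀ w, ‖w‖ ≤ r → ∀ x, ‖D w x‖ ≤ 1 / 10 * ‖x‖ := fun w hw x =>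
    (D w).le_of_opNorm_le (hg.Db w hw) x
  let Φ : E → (E →L[ℝ] E) := fun w => (ContinuousLinearMap.fst ℝ E V).comp (J w)
  let Ψ : E → (E →L[ℝ] V) := fun w => (ContinuousLinearMap.snd ℝ E V).comp (J w)
  have hΦ : ∀ w x, Φ w x = (J w x).1 := fun w x => rfl
  have hΨ : ∀ w x, Ψ w x = (J w x).2 := fun w x => rfl
  have hΦe : ∀ w, ‖w‖ ≤ r → ∀ x, (a - δ) * ‖x‖ ≤ ‖Φ w x‖ := by
    intro w hw x
    have k1 := hf.d1 _ (hz w hw) (x, D w x)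
    rw [norm_pair_of_le (hDx w hw x)] at k1
    have k2 := hf.ex x
    have k3 := norm_sub_norm_le (A x) (Φ w x)
    rw [norm_sub_rev (A x)] at k3
    rw [← hJ, ← hΦ] at k1
    simp only at k1
    linarith
  have hΨb : ∀ w, ‖w‖ ≤ r → ∀ x, ‖Ψ w x‖ ≤ (a - δ) / 10 * ‖x‖ := by
    intro w hw x
    have k1 := hf.d2 _ (hz w hw) (x, D w x)
    rw [norm_pair_of_le (hDx w hw x), ← hJ, ← hΨ] at k1
    have k2 := hDx w hw x
    simp only at k1
    have := norm_nonneg x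
    nlinarith
  have hT : ∀ w, ∃ T : E →L[ℝ] V, ‖w‖ ≤ r → ∀ x, T (Φ w x) = Ψ w x := by
    intro w
    by_cases hw : ‖w‖ ≤ r
    · obtain ⟨T, hT⟩ := factor_of_expand ha0 (Φ w) (hΦe w hw) (Ψ w)
      exact ⟨T, fun _ => hT⟩
    · exact ⟨0, fun h => absurd h hw⟩
  choose T hT using hT
  have hΦs : ∀ w, ‖w‖ ≤ r → ∀ y, ∃ x, Φ w x = y := fun w hw =>
    (surj_of_expand ha0 (Φ w) (hΦe w hw)).2
  have hTb : ∀ w, ‖w‖ ≤ r → ‖T w‖ ≤ 1 / 10 := by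
    intro w hw
    refine ContinuousLinearMap.opNorm_le_bound _ (by norm_num) fun y => ?_
    obtain ⟨x, rfl⟩ := hΦs w hw y
    rw [hT w hw]
    have k1 := hΨb w hw x
    have k2 := hΦe w hw x
    linarith
  -- second-order estimate on the fibre error
  have hDf0 : ∀ w, ‖w‖ ≤ r → ∀ y : V, ‖(Df (w, g w) (0, y)).1‖ ≤ δ * ‖y‖ ∧
      ‖(Df (w, g w) (0, y)).2‖ ≤ (b + δ) * ‖y‖ := by
    intro w hw y
    have hn : ‖((0 : E), y)‖ = ‖y‖ := by simp [Prod.norm_def]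
    have k1 := hf.d1 _ (hz w hw) ((0 : E), y)
    have k2 := hf.d2 _ (hz w hw) ((0 : E), y)
    rw [hn] at k1 k2
    simp only [map_zero, sub_zero] at k1 k2
    exact ⟨k1, by linarith⟩
  have hh0 : 0 ≤ r' → h 0 = 0 := by
    intro hr'
    have := hexp (h 0) 0 (hhr 0 (by simpa using hr')) (by simpa using hr)
    rw [hhu 0 (by simpa using hr'), f0] at this
    simp only [sub_zero, norm_zero] at this
    exact norm_eq_zero.1 (le_antisymm (by nlinarith [norm_nonneg (h 0)]) (norm_nonneg _))
  -- general bookkeeping inequality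
  have key : ∀ t p q : ℝ, 0 ≤ t →
      p ≤ (ℓ + (b + δ) * M) * t → q ≤ (ℓ + δ * M) * t →
      p + 1 / 10 * q ≤ (M' * (a - δ) ^ 2) * t := by
    intro t p q ht hp hq
    have : (ℓ * (11 / 10) + (b + 11 / 10 * δ) * M) * t ≤ (M' * (a - δ) ^ 2) * t :=
      mul_le_mul_of_nonneg_right h3 ht
    nlinarith
  by_cases hr' : 0 ≤ r'
  swap
  · refine ⟨0, 0, ⟨rfl, rfl, ?_, ?_, ?_, ?_⟩, ?_⟩ <;>
    · intro u
      intros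
      exact absurd ((norm_nonneg u).trans (by assumption)) hr'
  have hw0 : (((0 : E), g 0) : E × V) = 0 := by rw [hg.g0]; rfl
  refine ⟨fun u => (f (h u, g (h u))).2, fun u => T (h u), ⟨?_, ?_, ?_, ?_, ?_, ?_⟩, ?_⟩
  · simp only [hh0 hr', hw0, hf.zero]; rfl
  · ext y
    simp only [hh0 hr']
    obtain ⟨x, rfl⟩ := hΦs 0 (by simpa using hr) y
    rw [hT 0 (by simpa using hr), hΨ, hJ, hw0, hg.D0]
    simpa using hf.d0 x
  · intro u u' hu hu'
    have hw := hhr u hu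
    have hw' := hhr u' hu'
    have k1 := hf.n2 _ _ (hz _ hw') (hz _ hw)
    rw [hzz _ _ hw' hw] at k1
    have k2 := hg.lip _ _ hw hw'
    have k3 := hcon u u' hu hu'
    simp only at k1 ⊢
    have := norm_nonneg (h u' - h u)
    nlinarith
  · intro u hu
    exact hTb _ (hhr u hu)
  · intro u u' hu hu'
    have hw := hhr u hu
    have hw' := hhr u' hu'
    have k3 := hcon u u' hu hu'
    generalize hwd : h u = w at *
    generalize hwd' : h u' = w' at *
    have eu : (f (w, g w)).1 = u := by rw [← hwd]; exact hhu u hu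
    have eu' : (f (w', g w')).1 = u' := by rw [← hwd']; exact hhu u' hu'
    let y := g w' - g w - D w (w' - w)
    have hy : ‖y‖ ≤ M * ‖w' - w‖ ^ 2 := hg.q w w' hw hw'
    let e0 := f (w', g w') - f (w, g w) - Df (w, g w) ((w', g w') - (w, g w))
    have he0 : ‖e0‖ ≤ ℓ * ‖w' - w‖ ^ 2 := by
      have := hf.t _ _ (hz w hw) (hz w' hw')
      rwa [hzz w' w hw' hw] at this
    let e := e0 + Df (w, g w) (0, y)
    have he : f (w', g w') - f (w, g w) = J w (w' - w) + e := by
      have : ((w', g w') - (w, g w) : E × V) = (w' - w, D w (w' - w)) + (0, y) := by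
        simp [y]
      simp only [e, e0, this, map_add, hJ]
      abel
    have he1 : ‖e.1‖ ≤ (ℓ + δ * M) * ‖w' - w‖ ^ 2 := by
      have q1 : ‖e.1‖ ≤ ‖e0.1‖ + ‖(Df (w, g w) (0, y)).1‖ := norm_add_le _ _
      have q2 : ‖e0.1‖ ≤ ‖e0‖ := norm_fst_le _
      have q3 := (hDf0 w hw y).1
      have q4 := mul_le_mul_of_nonneg_left hy hδ.le
      nlinarith
    have he2 : ‖e.2‖ ≤ (ℓ + (b + δ) * M) * ‖w' - w‖ ^ 2 := by
      have q1 : ‖e.2‖ ≤ ‖e0.2‖ + ‖(Df (w, g w) (0, y)).2‖ := norm_add_le _ _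
      have q2 : ‖e0.2‖ ≤ ‖e0‖ := norm_snd_le _
      have q3 := (hDf0 w hw y).2
      have q4 := mul_le_mul_of_nonneg_left hy (by linarith : 0 ≤ b + δ)
      nlinarith
    have r1 : u' - u = Φ w (w' - w) + e.1 := by
      have := congrArg Prod.fst he
      rwa [Prod.fst_sub, eu, eu', Prod.fst_add, ← hΦ] at this
    have r2 : (f (w', g w')).2 - (f (w, g w)).2 = Ψ w (w' - w) + e.2 := by
      have := congrArg Prod.snd he
      rwa [Prod.snd_sub, Prod.snd_add, ← hΨ] at this
    have r3 : (f (w', g w')).2 - (f (w, g w)).2 - T w (u' - u) = e.2 - T w e.1 := by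
      rw [r2, r1, map_add, hT w hw]; abel
    rw [r3]
    have s1 := norm_sub_le e.2 (T w e.1)
    have s2 := (T w).le_of_opNorm_le (hTb w hw) e.1
    have s3 := key _ _ _ (sq_nonneg _) he2 he1
    have s4 : ((a - δ) * ‖w' - w‖) ^ 2 ≤ ‖u' - u‖ ^ 2 :=
      pow_le_pow_left₀ (by positivity) k3 2
    have s5 := mul_le_mul_of_nonneg_left s4 hM'
    calc _ ≤ _ := s1
      _ ≤ M' * ((a - δ) * ‖w' - w‖) ^ 2 := by rw [mul_pow, ← mul_assoc]; linarith
      _ ≤ _ := s5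
  · intro u u' hu hu'
    have hw := hhr u hu
    have hw' := hhr u' hu'
    have k3 := hcon u u' hu hu'
    generalize h u = w at *
    generalize h u' = w' at *
    refine ContinuousLinearMap.opNorm_le_bound _ (by positivity) fun y => ?_
    obtain ⟨x, rfl⟩ := hΦs w hw y
    have hx := hΦe w hw x
    have r3 : (T w' - T w) (Φ w x) = (Ψ w' x - Ψ w x) - T w' (Φ w' x - Φ w x) := by
      rw [map_sub, hT w' hw', ContinuousLinearMap.sub_apply, hT w hw]; abel
    let e0 := (Df (w', g w') - Df (w, g w)) (x, D w' x)
    let v := (D w' - D w) x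
    let e := e0 + Df (w, g w) (0, v)
    have he0 : ‖e0‖ ≤ ℓ * (‖w' - w‖ * ‖x‖) := by
      have q1 := hf.l _ _ (hz w hw) (hz w' hw')
      rw [hzz w' w hw' hw] at q1
      have q2 := ContinuousLinearMap.le_of_opNorm_le _ q1 (x, D w' x)
      rw [norm_pair_of_le (hDx w' hw' x)] at q2
      linarith
    have hv : ‖v‖ ≤ M * (‖w' - w‖ * ‖x‖) := by
      have := ContinuousLinearMap.le_of_opNorm_le _ (hg.Dl w w' hw hw') x
      linarith
    have he : J w' x - J w x = e := by
      have : ((0 : E), v) = (x, D w' x) - (x, D w x) := by simp [v]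
      simp only [e, e0, this, map_sub, hJ, ContinuousLinearMap.sub_apply]
      abel
    have he1 : ‖e.1‖ ≤ (ℓ + δ * M) * (‖w' - w‖ * ‖x‖) := by
      have q1 : ‖e.1‖ ≤ ‖e0.1‖ + ‖(Df (w, g w) (0, v)).1‖ := norm_add_le _ _
      have q2 : ‖e0.1‖ ≤ ‖e0‖ := norm_fst_le _
      have q3 := (hDf0 w hw v).1
      have q4 := mul_le_mul_of_nonneg_left hv hδ.le
      nlinarith
    have he2 : ‖e.2‖ ≤ (ℓ + (b + δ) * M) * (‖w' - w‖ * ‖x‖) := by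
      have q1 : ‖e.2‖ ≤ ‖e0.2‖ + ‖(Df (w, g w) (0, v)).2‖ := norm_add_le _ _
      have q2 : ‖e0.2‖ ≤ ‖e0‖ := norm_snd_le _
      have q3 := (hDf0 w hw v).2
      have q4 := mul_le_mul_of_nonneg_left hv (by linarith : 0 ≤ b + δ)
      nlinarith
    have r1 : Φ w' x - Φ w x = e.1 := by rw [← he]; rfl
    have r2 : Ψ w' x - Ψ w x = e.2 := by rw [← he]; rfl
    rw [r3, r1, r2]
    have s1 := norm_sub_le e.2 (T w' e.1)
    have s2 := (T w').le_of_opNorm_le (hTb w' hw') e.1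
    have s3 := key _ _ _ (by positivity) he2 he1
    have s4 : ((a - δ) * ‖w' - w‖) * ((a - δ) * ‖x‖) ≤ ‖u' - u‖ * ‖Φ w x‖ :=
      mul_le_mul k3 hx (by positivity) (by positivity)
    have s5 := mul_le_mul_of_nonneg_left s4 hM'
    calc _ ≤ _ := s1
      _ ≤ M' * (((a - δ) * ‖w' - w‖) * ((a - δ) * ‖x‖)) := by
        linarith
      _ ≤ _ := s5
      _ = _ := by ring
  · intro u hu
    exact ⟨h u, hhr u hu, Prod.ext (hhu u hu) rfl⟩


lemma uniq_step {a b δ ℓ r θ c : ℝ} (hδ : 0 < δ) (hδ1 : δ ≤ 1) (hb : 0 ≤ b) (ha : 1 ≤ a - δ)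
    (hr : 0 ≤ r) (hc : 0 ≤ c) (hθ : b + δ ≤ θ * ((1 - δ / 10) * (a - δ)))
    {f : E × V → E × V} {Df : E × V → (E × V →L[ℝ] E × V)} {A : E →L[ℝ] E}
    (hf : CMap a b δ ℓ r f Df A) {g g' : E → V} (hg0 : g 0 = 0) (hg0' : g' 0 = 0)
    (hg : ∀ u u', ‖u‖ ≤ r → ‖u'‖ ≤ r → ‖g u' - g u‖ ≤ 1 / 10 * ‖u' - u‖)
    (hg' : ∀ u u', ‖u‖ ≤ r → ‖u'‖ ≤ r → ‖g' u' - g' u‖ ≤ 1 / 10 * ‖u' - u‖)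
    (hc : ∀ w, ‖w‖ ≤ r → ‖g w - g' w‖ ≤ c * ‖w‖)
    {u : E} {v v' : V} {w w' : E} (hw : ‖w‖ ≤ r) (hw' : ‖w'‖ ≤ r)
    (h1 : f (w, g w) = (u, v)) (h2 : f (w', g' w') = (u, v')) :
    ‖v - v'‖ ≤ θ * c * ‖u‖ := by
  have r0 : ‖(0 : E)‖ ≤ r := by simpa using hr
  have k1 : ‖g w‖ ≤ 1 / 10 * ‖w‖ := by simpa [hg0] using hg 0 w r0 hw
  have k1' : ‖g' w'‖ ≤ 1 / 10 * ‖w'‖ := by simpa [hg0'] using hg' 0 w' r0 hw'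
  have hz : ‖(w, g w)‖ ≤ r := by rwa [norm_pair_of_le k1]
  have hz' : ‖(w', g' w')‖ ≤ r := by rwa [norm_pair_of_le k1']
  have n1 := hf.n1 _ _ hz hz'
  have n2 := hf.n2 _ _ hz hz'
  have n0 := hf.n1 _ 0 hz (by simpa using hr)
  rw [h1, h2] at n1 n2
  rw [h1, hf.zero] at n0
  simp only [sub_self, zero_sub, norm_neg, Prod.mk_sub_mk, Prod.fst_zero, sub_zero] at n1 n2 n0
  rw [norm_pair_of_le k1] at n0
  have e1 := hf.ex (w - w')
  have e0 := hf.ex w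
  have e0' := norm_sub_norm_le (A w) u
  rw [norm_sub_rev (A w)] at e0'
  have hwu : (a - δ) * ‖w‖ ≤ ‖u‖ := by linarith
  have hx := hc w hw
  have hy := hg' w' w hw' hw
  have tri : ‖g w - g' w'‖ ≤ ‖g w - g' w‖ + ‖g' w - g' w'‖ := norm_sub_le_norm_sub_add_norm_sub _ _ _
  rw [Prod.norm_def] at n1 n2
  simp only at n1 n2
  set x := ‖g w - g' w‖
  set y := ‖g w - g' w'‖
  set d := ‖w - w'‖
  have x0 : 0 ≤ x := norm_nonneg _
  have y0 : 0 ≤ y := norm_nonneg _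
  have d0 : 0 ≤ d := norm_nonneg _
  have hmax : max d y ≤ d + y := max_le (by linarith) (by linarith)
  have hd : d ≤ δ * y := by nlinarith
  have hdy : max d y = y := max_eq_right (by nlinarith)
  rw [hdy] at n2
  have hyx : (1 - δ / 10) * y ≤ x := by linarith
  have hv : ‖v - v'‖ ≤ (b + δ) * y := by linarith
  have hp : 0 < (1 - δ / 10) * (a - δ) := mul_pos (by linarith) (by linarith)
  have hθ0 : 0 ≤ θ := by
    by_contra hneg
    push Not at hneg
    nlinarith
  calc ‖v - v'‖ ≤ (b + δ) * y := hv
    _ ≤ θ * ((1 - δ / 10) * (a - δ)) * y := mul_le_mul_of_nonneg_right hθ y0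
    _ = θ * ((a - δ) * ((1 - δ / 10) * y)) := by ring
    _ ≤ θ * ((a - δ) * (c * ‖w‖)) := by
        refine mul_le_mul_of_nonneg_left ?_ hθ0
        exact mul_le_mul_of_nonneg_left (hyx.trans hx) (by linarith)
    _ = θ * c * ((a - δ) * ‖w‖) := by ring
    _ ≤ θ * c * ‖u‖ := mul_le_mul_of_nonneg_left hwu (by positivity)

lemma ulim {X : Type*} [NormedAddCommGroup X] [ProperSpace X] (U : Ultrafilter ℕ)
    (x : ℕ → X) (R : ℝ) (h : ∀ N, ‖x N‖ ≤ R) :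
    ∃ y, Filter.Tendsto x (U : Filter ℕ) (nhds y) := by
  obtain ⟨y, -, hy⟩ := (isCompact_closedBall (0 : X) R).ultrafilter_le_nhds (U.map x) (by
    rw [Filter.le_principal_iff]
    change x ⁻¹' closedBall 0 R ∈ (U : Filter ℕ)
    exact Filter.Eventually.of_forall (fun N => by simpa using h N))
  exact ⟨y, hy⟩

lemma exists_family (r M : ℕ → ℝ) (hr : ∀ n, 0 ≤ r n) (hM : ∀ n, 0 ≤ M n)
    (F : ℕ → E × V → E × V)
    (hF : ∀ n, ContinuousOn (F n) (closedBall 0 (r (n + 1))))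
    (hstep : ∀ n (g : E → V) (D : E → (E →L[ℝ] V)), GG (r (n + 1)) (M (n + 1)) g D →
      ∃ (g' : E → V) (D' : E → (E →L[ℝ] V)), GG (r n) (M n) g' D' ∧
      ∀ u, ‖u‖ ≤ r n → ∃ w, ‖w‖ ≤ r (n + 1) ∧ F n (w, g w) = (u, g' u)) :
    ∃ (g : ℕ → E → V) (D : ℕ → E → (E →L[ℝ] V)), (∀ n, GG (r n) (M n) (g n) (D n)) ∧
      ∀ n u, ‖u‖ ≤ r n → ∃ w, ‖w‖ ≤ r (n + 1) ∧ F n (w, g (n + 1) w) = (u, g n u) := by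
  have : ProperSpace E := FiniteDimensional.proper ℝ E
  have : ProperSpace V := FiniteDimensional.proper ℝ V
  have : ProperSpace (E →L[ℝ] V) := FiniteDimensional.proper ℝ _
  let S : ℕ → Type _ := fun n =>
    {p : (E → V) × (E → (E →L[ℝ] V)) // GG (r n) (M n) p.1 p.2}
  have hT : ∀ n (p : S (n + 1)), ∃ q : S n,
      ∀ u, ‖u‖ ≤ r n → ∃ w, ‖w‖ ≤ r (n + 1) ∧ F n (w, p.1.1 w) = (u, q.1.1 u) := by
    intro n p
    obtain ⟨g', D', h, h'⟩ := hstep n p.1.1 p.1.2 p.2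
    exact ⟨⟨(g', D'), h⟩, h'⟩
  choose T hT using hT
  have hzero : ∀ n, GG (r n) (M n) (0 : E → V) (0 : E → (E →L[ℝ] V)) := by
    intro n
    refine ⟨rfl, rfl, ?_, ?_, ?_, ?_⟩
    · intros; simp
    · intros; simp
    · intros; simpa using mul_nonneg (hM n) (sq_nonneg _)
    · intros; simpa using mul_nonneg (hM n) (norm_nonneg _)
  let s : ℕ → ∀ n, S n := fun m =>
    Nat.rec (motive := fun _ => ∀ n, S n) (fun n => ⟨(0, 0), hzero n⟩)
      (fun _ ih n => T n (ih (n + 1))) m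
  have hs : ∀ m n, s (m + 1) n = T n (s m (n + 1)) := fun m n => rfl
  let U : Ultrafilter ℕ := Filter.hyperfilter ℕ
  let γ : ℕ → ℕ → E → V := fun N n => (s (N - n) n).1.1
  let Δ : ℕ → ℕ → E → (E →L[ℝ] V) := fun N n => (s (N - n) n).1.2
  have hG : ∀ N n, GG (r n) (M n) (γ N n) (Δ N n) := fun N n => (s (N - n) n).2
  have r0 : ∀ n, ‖(0 : E)‖ ≤ r n := fun n => by simpa using hr n
  have hlim : ∀ n u, ‖u‖ ≤ r n → ∃ y, Filter.Tendsto (fun N => γ N n u) (U : Filter ℕ) (nhds y) := by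
    intro n u hu
    refine ulim U _ (1 / 10 * ‖u‖) fun N => ?_
    simpa [(hG N n).g0] using (hG N n).lip 0 u (r0 n) hu
  have hlimD : ∀ n u, ‖u‖ ≤ r n → ∃ y, Filter.Tendsto (fun N => Δ N n u) (U : Filter ℕ) (nhds y) := by
    intro n u hu
    exact ulim U _ (1 / 10) fun N => (hG N n).Db u hu
  choose! g hg using hlim
  choose! D hD using hlimD
  have hlip : ∀ n u u', ‖u‖ ≤ r n → ‖u'‖ ≤ r n → ‖g n u' - g n u‖ ≤ 1 / 10 * ‖u' - u‖ := by
    intro n u u' hu hu'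
    exact le_of_tendsto' ((hg n u' hu').sub (hg n u hu)).norm
      fun N => (hG N n).lip u u' hu hu'
  refine ⟨g, D, fun n => ⟨?_, ?_, hlip n, ?_, ?_, ?_⟩, ?_⟩
  · refine tendsto_nhds_unique (hg n 0 (r0 n)) ?_
    simp only [(hG _ n).g0]
    exact tendsto_const_nhds
  · refine tendsto_nhds_unique (hD n 0 (r0 n)) ?_
    simp only [(hG _ n).D0]
    exact tendsto_const_nhds
  · intro u hu
    exact le_of_tendsto' (hD n u hu).norm fun N => (hG N n).Db u hu
  · intro u u' hu hu'
    have h1 : Filter.Tendsto (fun N => Δ N n u (u' - u)) (U : Filter ℕ) (nhds (D n u (u' - u))) :=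
      ((ContinuousLinearMap.apply ℝ V (u' - u)).continuous.tendsto (D n u)).comp (hD n u hu)
    exact le_of_tendsto' (((hg n u' hu').sub (hg n u hu)).sub h1).norm
      fun N => (hG N n).q u u' hu hu'
  · intro u u' hu hu'
    exact le_of_tendsto' ((hD n u' hu').sub (hD n u hu)).norm
      fun N => (hG N n).Dl u u' hu hu'
  · intro n u hu
    have hex : ∀ N, ∃ w, ‖w‖ ≤ r (n + 1) ∧ (n < N → F n (w, γ N (n + 1) w) = (u, γ N n u)) := by
      intro N
      by_cases hN : n < N
      · obtain ⟨w, hw, h⟩ := hT n (s (N - (n + 1)) (n + 1)) u hu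
        refine ⟨w, hw, fun _ => ?_⟩
        have e : N - n = (N - (n + 1)) + 1 := by omega
        have e2 : γ N n = (T n (s (N - (n + 1)) (n + 1))).1.1 := by
          simp only [γ]
          rw [e, hs]
        rw [e2]
        exact h
      · exact ⟨0, r0 _, fun h => absurd h hN⟩
    choose w hw hFw using hex
    obtain ⟨w0, hw0⟩ := ulim U w _ hw
    have hw0r : ‖w0‖ ≤ r (n + 1) := le_of_tendsto' hw0.norm hw
    refine ⟨w0, hw0r, ?_⟩
    have hgam : Filter.Tendsto (fun N => γ N (n + 1) (w N)) (U : Filter ℕ) (nhds (g (n + 1) w0)) := by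
      have h1 : Filter.Tendsto (fun N => γ N (n + 1) (w N) - γ N (n + 1) w0) (U : Filter ℕ)
          (nhds 0) := by
        refine squeeze_zero_norm (a := fun N => 1 / 10 * ‖w N - w0‖)
          (fun N => (hG N (n + 1)).lip w0 (w N) hw0r (hw N)) ?_
        have := ((hw0.sub_const w0).norm).const_mul (1 / 10 : ℝ)
        simpa using this
      simpa using h1.add (hg (n + 1) w0 hw0r)
    have hball : ∀ N, (w N, γ N (n + 1) (w N)) ∈ closedBall (0 : E × V) (r (n + 1)) := by
      intro N
      have : ‖γ N (n + 1) (w N)‖ ≤ 1 / 10 * ‖w N‖ := by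
        simpa [(hG N (n + 1)).g0] using (hG N (n + 1)).lip 0 (w N) (r0 _) (hw N)
      rw [mem_closedBall_zero_iff, norm_pair_of_le this]
      exact hw N
    have hpair := hw0.prodMk_nhds hgam
    have hmem : (w0, g (n + 1) w0) ∈ closedBall (0 : E × V) (r (n + 1)) :=
      isClosed_closedBall.mem_of_tendsto hpair (Filter.Eventually.of_forall hball)
    have hc : Filter.Tendsto (fun N => F n (w N, γ N (n + 1) (w N))) (U : Filter ℕ)
        (nhds (F n (w0, g (n + 1) w0))) :=
      (hF n _ hmem).tendsto.comp
        (tendsto_nhdsWithin_iff.2 ⟨hpair, Filter.Eventually.of_forall hball⟩)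
    have hc2 : Filter.Tendsto (fun N => (u, γ N n u)) (U : Filter ℕ) (nhds (u, g n u)) :=
      tendsto_const_nhds.prodMk_nhds (hg n u hu)
    refine tendsto_nhds_unique hc (hc2.congr' ?_)
    have hgt : ∀ᶠ N in (U : Filter ℕ), n < N :=
      (Filter.eventually_gt_atTop n).filter_mono (Nat.hyperfilter_le_atTop)
    filter_upwards [hgt] with N hN
    exact (hFw N hN).symm

lemma GG.hasFDeriv {r M : ℝ} {g : E → V} {D : E → (E →L[ℝ] V)} (h : GG r M g D)
    (u : E) (hu : u ∈ closedBall (0 : E) r) :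
    HasFDerivWithinAt g (D u) (closedBall (0 : E) r) u := by
  rw [hasFDerivWithinAt_iff_isLittleO]
  have h1 : (fun x' => g x' - g u - D u (x' - u)) =O[nhdsWithin u (closedBall 0 r)]
      (fun x' => ‖x' - u‖ ^ 2) := by
    refine Asymptotics.IsBigO.of_bound M ?_
    filter_upwards [self_mem_nhdsWithin] with x hx
    simpa using h.q u x (by simpa using hu) (by simpa using hx)
  refine h1.trans_isLittleO ?_
  have h2 : (fun x' : E => ‖x' - u‖ ^ 2) =o[nhds u] (fun x' => x' - u) := by
    exact Asymptotics.isLittleO_pow_sub_sub u (by norm_num)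
  exact h2.mono nhdsWithin_le_nhds

end generic

lemma IsChartMap.toCMap {du dcs : ℕ} {lam δ0 ℓ δ : ℝ} {f : PSp du dcs → PSp du dcs}
    {Df : PSp du dcs → (PSp du dcs →L[ℝ] PSp du dcs)} (h : IsChartMap du dcs lam δ0 ℓ δ f Df)
    (hδ : 0 < δ) (hℓ : 1 ≤ ℓ) :
    ∃ A, CMap (Real.exp lam) (Real.exp δ0) δ ℓ (δ / ℓ) f Df A := by
  have hℓ0 : 0 < ℓ := by linarith
  have hr : 0 ≤ δ / ℓ := by positivity
  have dec : ∀ p : PSp du dcs, Df 0 p = Df 0 (p.1, 0) + Df 0 (0, p.2) := by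
    intro p
    rw [← map_add]; simp
  let A : EuSp du →L[ℝ] EuSp du := (ContinuousLinearMap.fst ℝ _ _).comp
    ((Df 0).comp (ContinuousLinearMap.inl ℝ (EuSp du) (CsSp dcs)))
  have hA : ∀ x, A x = (Df 0 (x, 0)).1 := fun x => rfl
  have c1 : ∀ p : PSp du dcs, (Df 0 p).1 = A p.1 := by
    intro p
    rw [dec, Prod.fst_add, h.deriv_zero_mapsCs, add_zero, hA]
  have c2 : ∀ p : PSp du dcs, ‖(Df 0 p).2‖ ≤ Real.exp δ0 * ‖p.2‖ := by
    intro p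
    rw [dec, Prod.snd_add, h.deriv_zero_mapsU, zero_add]
    exact (norm_snd_le _).trans (h.contract _)
  have hN : ∀ z z', ‖z‖ ≤ δ / ℓ → ‖z'‖ ≤ δ / ℓ →
      ‖f z - f z' - Df 0 (z - z')‖ ≤ δ * ‖z - z'‖ := by
    intro z z' hz hz'
    have := (h.lip_nonlinear δ hδ le_rfl).norm_sub_le (mem_closedBall_zero_iff.2 hz)
      (mem_closedBall_zero_iff.2 hz')
    rw [Real.coe_toNNReal _ hδ.le] at this
    have e : f z - f z' - Df 0 (z - z') = f z - Df 0 z - (f z' - Df 0 z') := by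
      rw [map_sub]; abel
    rw [e]
    exact this
  have hL : ∀ z z', ‖z‖ ≤ δ / ℓ → ‖z'‖ ≤ δ / ℓ → ‖Df z' - Df z‖ ≤ ℓ * ‖z' - z‖ := by
    intro z z' hz hz'
    have := h.lipDeriv.norm_sub_le (mem_closedBall_zero_iff.2 hz')
      (mem_closedBall_zero_iff.2 hz)
    rwa [Real.coe_toNNReal _ hℓ0.le] at this
  have hD : ∀ z, ‖z‖ ≤ δ / ℓ → ∀ p, ‖Df z p - Df 0 p‖ ≤ δ * ‖p‖ := by
    intro z hz p
    have q1 := hL 0 z (by simpa using hr) hz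
    rw [sub_zero] at q1
    have q2 : ‖Df z - Df 0‖ ≤ δ := q1.trans (by
      have := mul_le_mul_of_nonneg_left hz hℓ0.le
      rwa [mul_div_cancel₀ _ hℓ0.ne'] at this)
    exact (Df z - Df 0).le_of_opNorm_le q2 p
  refine ⟨A, h.map_zero, ?_, ?_, ?_, hL, ?_, ?_, h.deriv_zero_mapsU, ?_⟩
  · intro z z' hz hz'
    have := (norm_fst_le _).trans (hN z z' hz hz')
    rwa [Prod.fst_sub, Prod.fst_sub, c1, Prod.fst_sub] at this
  · intro z z' hz hz'
    have q1 := (norm_snd_le _).trans (hN z z' hz hz')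
    rw [Prod.snd_sub, Prod.snd_sub] at q1
    have q2 := c2 (z - z')
    rw [Prod.snd_sub] at q2
    have q3 := norm_sub_norm_le ((f z).2 - (f z').2) (Df 0 (z - z')).2
    linarith
  · intro z z' hz hz'
    have hseg : segment ℝ z z' ⊆ closedBall (0 : PSp du dcs) (δ / ℓ) :=
      (convex_closedBall _ _).segment_subset (mem_closedBall_zero_iff.2 hz)
        (mem_closedBall_zero_iff.2 hz')
    have := (convex_segment z z').norm_image_sub_le_of_norm_hasFDerivWithin_le'
      (f := f) (f' := Df) (φ := Df z) (C := ℓ * ‖z' - z‖)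
      (fun x hx => (h.hasDeriv x (hseg hx)).mono hseg) (fun x hx => by
        refine (hL z x hz (mem_closedBall_zero_iff.1 (hseg hx))).trans ?_
        refine mul_le_mul_of_nonneg_left ?_ hℓ0.le
        exact norm_sub_le_of_mem_segment hx) (left_mem_segment ℝ z z') (right_mem_segment ℝ z z')
    rw [pow_two, ← mul_assoc]
    exact this
  · intro z hz p
    have := (norm_fst_le _).trans (hD z hz p)
    rwa [Prod.fst_sub, c1] at this
  · intro z hz p
    have q1 := (norm_snd_le _).trans (hD z hz p)
    rw [Prod.snd_sub] at q1
    have q2 := c2 p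
    have q3 := norm_sub_norm_le (Df z p).2 (Df 0 p).2
    linarith
  · intro x
    have q := h.expand x
    rw [Prod.norm_def, h.deriv_zero_mapsU, norm_zero, max_eq_left (norm_nonneg _)] at q
    exact q

/-- The local unstable manifold theorem along a backward hyperbolic chart sequence
(Proposition 2.5), in chart-level form.  Backward indices `k ≤ 0` are modelled by
`n : ℕ` via `k = -n`: `L n = ℓ_{-n}`, and `F n` is the connecting chart map
`f̃_{-(n+1)}`, carrying chart `-(n+1)` to chart `-n`, with data `(lam, δ0, L (n+1), δ)`. -/
theorem local_unstable_manifolds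
    (du dcs : ℕ) (hdu : 1 ≤ du) (hdcs : 1 ≤ dcs)
    (lam δ0 δ2 : ℝ) (hlam : 0 < lam) (hδ0 : 0 ≤ δ0) (hδ2 : 0 ≤ δ2)
    (hsmall : δ0 + δ2 < lam / 4) :
    ∃ δstar C : ℝ, 0 < δstar ∧ 0 < C ∧
      ∀ δ : ℝ, 0 < δ → δ < δstar →
      ∀ (L : ℕ → ℝ) (F : ℕ → PSp du dcs → PSp du dcs)
        (DF : ℕ → PSp du dcs → (PSp du dcs →L[ℝ] PSp du dcs)),
        (∀ n, 1 ≤ L n) →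
        (∀ n, Real.exp (-δ2) ≤ L n / L (n + 1)) →
        (∀ n, L n / L (n + 1) ≤ Real.exp δ2) →
        (∀ n, IsChartMap du dcs lam δ0 (L (n + 1)) δ (F n) (DF n)) →
        ∃ g : ℕ → EuSp du → CsSp dcs,
          -- the defining properties of the family
          (∀ n, g n 0 = 0) ∧
          (∀ n, LipschitzOnWith ((1 : ℝ) / 10).toNNReal (g n)
            (closedBall (0 : EuSp du) (δ / L n))) ∧
          (∀ n, uGraph du dcs (δ / L n) (g n) ⊆
            F n '' uGraph du dcs (δ / L (n + 1)) (g (n + 1))) ∧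
          -- moreover: each `g_k` is `C^{1+Lip}` with `(dg_k)₀ = 0` and `Lip(dg_k) ≤ C ℓ_k`
          (∀ n, ∃ Dgn : EuSp du → (EuSp du →L[ℝ] CsSp dcs),
            (∀ u ∈ closedBall (0 : EuSp du) (δ / L n),
              HasFDerivWithinAt (g n) (Dgn u) (closedBall (0 : EuSp du) (δ / L n)) u) ∧
            Dgn 0 = 0 ∧
            LipschitzOnWith (C * L n).toNNReal Dgn
              (closedBall (0 : EuSp du) (δ / L n))) ∧
          -- backward expansion along the graphs
          (∀ n, ∀ z1 ∈ uGraph du dcs (δ / L (n + 1)) (g (n + 1)),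
            ∀ z2 ∈ uGraph du dcs (δ / L (n + 1)) (g (n + 1)),
            F n z1 ∈ uGraph du dcs (δ / L n) (g n) →
            F n z2 ∈ uGraph du dcs (δ / L n) (g n) →
            (Real.exp lam - δ) * ‖z1 - z2‖ ≤ ‖F n z1 - F n z2‖) ∧
          -- uniqueness of the family
          (∀ g' : ℕ → EuSp du → CsSp dcs,
            (∀ n, g' n 0 = 0) →
            (∀ n, LipschitzOnWith ((1 : ℝ) / 10).toNNReal (g' n)
              (closedBall (0 : EuSp du) (δ / L n))) →
            (∀ n, uGraph du dcs (δ / L n) (g' n) ⊆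
              F n '' uGraph du dcs (δ / L (n + 1)) (g' (n + 1))) →
            ∀ n, ∀ u ∈ closedBall (0 : EuSp du) (δ / L n), g' n u = g n u) := by
  have hb1 : 1 ≤ Real.exp δ0 := Real.one_le_exp hδ0
  have hc1 : 1 ≤ Real.exp δ2 := Real.one_le_exp hδ2
  have hbc : Real.exp δ0 * Real.exp δ2 < Real.exp lam := by
    rw [← Real.exp_add]
    exact Real.exp_lt_exp.2 (by linarith)
  have hcinv : Real.exp (-δ2) = (Real.exp δ2)⁻¹ := Real.exp_neg δ2
  rw [hcinv]
  generalize Real.exp δ2 = c at *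
  generalize hb : Real.exp δ0 = b at *
  generalize ha : Real.exp lam = a at *
  have hd : 0 < a - b * c := by linarith
  have hbc1 : 1 ≤ b * c := one_le_mul_of_one_le_of_one_le hb1 hc1
  have ha1 : 1 < a := by linarith
  have hb_bc : b ≤ b * c := le_mul_of_one_le_right (by linarith) hc1
  have hc_bc : c ≤ b * c := le_mul_of_one_le_left (by linarith) hb1
  refine ⟨(a - b * c) / (20 * (a * c)), 4 * c / (a - b * c), by positivity, by positivity, ?_⟩
  intro δ hδ hδs L F DF hL1 hLl hLu hchart
  -- numerical consequences
  have hac : 0 < 20 * (a * c) := by positivity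
  rw [lt_div_iff₀ hac] at hδs
  have hδc : 0 < δ * c := by positivity
  have hδa : 0 < δ * a := by positivity
  have i1 : 20 * (δ * c) < a - b * c := by nlinarith
  have i2 : 20 * (δ * a) < a - b * c := by nlinarith
  have i3 : δ ≤ δ * c := le_mul_of_one_le_right hδ.le hc1
  have hδ1 : δ ≤ 1 := by nlinarith
  have haδ : b * c + 19 / 20 * (a - b * c) ≤ a - δ := by linarith
  have haδ1 : 1 ≤ a - δ := by linarith
  have hLp : ∀ n, 0 < L n := fun n => lt_of_lt_of_le one_pos (hL1 n)
  have hLc : ∀ n, L (n + 1) ≤ c * L n := by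
    intro n
    have := hLl n
    rw [le_div_iff₀ (hLp _), inv_mul_le_iff₀ (by linarith)] at this
    exact this
  have hr : ∀ n, 0 ≤ δ / L n := fun n => by have := hLp n; positivity
  have h1 : ∀ n, δ / L n ≤ (a - δ) * (δ / L (n + 1)) := by
    intro n
    rw [← mul_div_assoc, div_le_div_iff₀ (hLp _) (hLp _)]
    have q1 : δ * L (n + 1) ≤ δ * (c * L n) := mul_le_mul_of_nonneg_left (hLc n) hδ.le
    have q2 : c * (δ * L n) ≤ (a - δ) * (δ * L n) :=
      mul_le_mul_of_nonneg_right (by linarith) (by have := hLp n; positivity)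
    linarith
  have h2 : b / 10 + δ ≤ (a - δ) / 10 := by linarith
  set K := 4 * c / (a - b * c) with hK
  have hK0 : 0 < K := by positivity
  have hKd : K * (a - b * c) = 4 * c := div_mul_cancel₀ _ hd.ne'
  have h3' : c * (11 / 10 + (b + 11 / 10 * δ) * K) ≤ K * (a - δ) ^ 2 := by
    have q1 : a - δ ≤ (a - δ) ^ 2 := by nlinarith
    have q2 : K * (b * c + 19 / 20 * (a - b * c)) ≤ K * (a - δ) ^ 2 :=
      mul_le_mul_of_nonneg_left (haδ.trans q1) hK0.le
    have q3 : K * (20 * (δ * c)) ≤ K * (a - b * c) := mul_le_mul_of_nonneg_left i1.le hK0.le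
    nlinarith
  have h3 : ∀ n, L (n + 1) * (11 / 10) + (b + 11 / 10 * δ) * (K * L (n + 1)) ≤
      K * L n * (a - δ) ^ 2 := by
    intro n
    have q1 : 0 ≤ 11 / 10 + (b + 11 / 10 * δ) * K := by positivity
    have q2 := mul_le_mul_of_nonneg_right (hLc n) q1
    have q3 := mul_le_mul_of_nonneg_left h3' (hLp n).le
    linarith
  have hcm : ∀ n, ∃ A, CMap a b δ (L (n + 1)) (δ / L (n + 1)) (F n) (DF n) A := by
    intro n
    have := (hchart n).toCMap hδ (hL1 _)
    rwa [ha, hb] at this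
  choose A hA using hcm
  obtain ⟨g, D, hG, hcov⟩ := exists_family (E := EuSp du) (V := CsSp dcs)
    (fun n => δ / L n) (fun n => K * L n) hr (fun n => by have := hLp n; positivity) F
    (fun n z hz => ((hchart n).hasDeriv z hz).continuousWithinAt)
    (fun n g D hg => graph_step_s10 hδ (by linarith) haδ1 (hr _)
      (by have := hLp (n + 1); positivity) (by have := hLp n; positivity) (hLp _).le (h1 n) h2
      (h3 n) (hA n) hg)
  have hexp : ∀ n, ∀ z1 ∈ uGraph du dcs (δ / L (n + 1)) (g (n + 1)),
      ∀ z2 ∈ uGraph du dcs (δ / L (n + 1)) (g (n + 1)),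
      (a - δ) * ‖z1 - z2‖ ≤ ‖F n z1 - F n z2‖ := by
    rintro n ⟨w1, v1⟩ ⟨hw1, hv1⟩ ⟨w2, v2⟩ ⟨hw2, hv2⟩
    simp only at hw1 hv1 hw2 hv2
    rw [mem_closedBall_zero_iff] at hw1 hw2
    subst hv1 hv2
    have k := (hG (n + 1))
    have r0 : ‖(0 : EuSp du)‖ ≤ δ / L (n + 1) := by simpa using hr (n + 1)
    have k1 : ‖g (n + 1) w1‖ ≤ 1 / 10 * ‖w1‖ := by simpa [k.g0] using k.lip 0 w1 r0 hw1
    have k2 : ‖g (n + 1) w2‖ ≤ 1 / 10 * ‖w2‖ := by simpa [k.g0] using k.lip 0 w2 r0 hw2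
    have m := (hA n).n1 (w1, g (n + 1) w1) (w2, g (n + 1) w2)
      (by rwa [norm_pair_of_le k1]) (by rwa [norm_pair_of_le k2])
    have e := (hA n).ex (w1 - w2)
    rw [Prod.mk_sub_mk, norm_pair_of_le (k.lip w2 w1 hw2 hw1)] at m ⊢
    simp only at m
    have p := norm_sub_norm_le (A n (w1 - w2))
      ((F n (w1, g (n + 1) w1)).1 - (F n (w2, g (n + 1) w2)).1)
    rw [norm_sub_rev (A n (w1 - w2))] at p
    have q := norm_fst_le (F n (w1, g (n + 1) w1) - F n (w2, g (n + 1) w2))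
    rw [Prod.fst_sub] at q
    linarith
  refine ⟨g, fun n => (hG n).g0, ?_, ?_, ?_, fun n z1 hz1 z2 hz2 _ _ => hexp n z1 hz1 z2 hz2, ?_⟩
  · intro n
    refine LipschitzOnWith.of_dist_le_mul fun x hx y hy => ?_
    rw [Real.coe_toNNReal _ (by norm_num), dist_eq_norm, dist_eq_norm]
    exact (hG n).lip y x (mem_closedBall_zero_iff.1 hy) (mem_closedBall_zero_iff.1 hx)
  · rintro n ⟨u, v⟩ ⟨hu, hv⟩
    simp only at hu hv
    subst hv
    obtain ⟨w, hw, h⟩ := hcov n u (mem_closedBall_zero_iff.1 hu)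
    exact ⟨(w, g (n + 1) w), ⟨mem_closedBall_zero_iff.2 hw, rfl⟩, h⟩
  · intro n
    refine ⟨D n, fun u hu => (hG n).hasFDeriv u hu, (hG n).D0, ?_⟩
    refine LipschitzOnWith.of_dist_le_mul fun x hx y hy => ?_
    rw [Real.coe_toNNReal _ (by have := hLp n; positivity), dist_eq_norm, dist_eq_norm]
    exact (hG n).Dl y x (mem_closedBall_zero_iff.1 hy) (mem_closedBall_zero_iff.1 hx)
  · intro g' hg0 hglip hgcov
    have hlip' : ∀ n u u', ‖u‖ ≤ δ / L n → ‖u'‖ ≤ δ / L n →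
        ‖g' n u' - g' n u‖ ≤ 1 / 10 * ‖u' - u‖ := by
      intro n u u' hu hu'
      have := (hglip n).norm_sub_le (mem_closedBall_zero_iff.2 hu') (mem_closedBall_zero_iff.2 hu)
      rwa [Real.coe_toNNReal _ (by norm_num)] at this
    have hp : 0 < (1 - δ / 10) * (a - δ) := mul_pos (by linarith) (by linarith)
    set θ := (b + δ) / ((1 - δ / 10) * (a - δ)) with hθ
    have hθ0 : 0 ≤ θ := by positivity
    have hθ1 : θ < 1 := by
      rw [hθ, div_lt_one hp]
      nlinarith
    have hθe : b + δ ≤ θ * ((1 - δ / 10) * (a - δ)) := by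
      rw [hθ, div_mul_cancel₀ _ hp.ne']
    have main : ∀ m n u, ‖u‖ ≤ δ / L n → ‖g n u - g' n u‖ ≤ θ ^ m * (1 / 5) * ‖u‖ := by
      intro m
      induction m with
      | zero =>
        intro n u hu
        have r0 : ‖(0 : EuSp du)‖ ≤ δ / L n := by simpa using hr n
        have k1 : ‖g n u‖ ≤ 1 / 10 * ‖u‖ := by simpa [(hG n).g0] using (hG n).lip 0 u r0 hu
        have k2 : ‖g' n u‖ ≤ 1 / 10 * ‖u‖ := by simpa [hg0 n] using hlip' n 0 u r0 hu
        have k3 := norm_sub_le (g n u) (g' n u)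
        rw [pow_zero]
        linarith
      | succ m ih =>
        intro n u hu
        obtain ⟨w, hw, h⟩ := hcov n u hu
        obtain ⟨⟨w', v'⟩, ⟨hw', hv'⟩, h'⟩ := hgcov n
          (show (u, g' n u) ∈ uGraph du dcs (δ / L n) (g' n) from
            ⟨mem_closedBall_zero_iff.2 hu, rfl⟩)
        simp only at hw' hv'
        subst hv'
        have := uniq_step hδ hδ1 (by linarith) haδ1 (hr (n + 1)) (by positivity) hθe (hA n)
          (hG (n + 1)).g0 (hg0 (n + 1)) (hG (n + 1)).lip (hlip' (n + 1)) (ih (n + 1))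
          hw (mem_closedBall_zero_iff.1 hw') h h'
        rw [pow_succ']
        linarith
    intro n u hu
    rw [mem_closedBall_zero_iff] at hu
    have ht : Filter.Tendsto (fun m : ℕ => θ ^ m * (1 / 5) * ‖u‖) Filter.atTop (nhds 0) := by
      have := ((tendsto_pow_atTop_nhds_zero_of_lt_one hθ0 hθ1).mul_const (1 / 5 : ℝ)).mul_const ‖u‖
      simpa using this
    have h0 := ge_of_tendsto' ht fun m => main m n u hu
    have := norm_le_zero_iff.1 h0
    exact (sub_eq_zero.1 this).symm
end
end
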